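/- As a left module over itself, u is the internal direct sum of the left ideals P_{2i,j}E^h := {x·E^h : x ∈ P_{2i,j}}, taken over j ∈ {0,1}, 1 ≤ i ≤ n²/2 and 0 ≤ h ≤ n²−2i; that is, these submodules are independent and their sum is all of u. -/

import Mathlib

noncomputable section

open scoped TensorProduct

namespace QFL

/-- The defining relations of the quasi-Frobenius-Lusztig kernel `ũ_q(sl₂)`,
on the free algebra on four generators `K = ι 0`, `K̂ = ι 1`, `E = ι 2`, `F = ι 3`. -/
inductive Rel (k : Type) [Field k] (n : ℕ) (q : k) :
    FreeAlgebra k (Fin 4) → FreeAlgebra k (Fin 4) → Prop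
  | Kord : Rel k n q (FreeAlgebra.ι k (0 : Fin 4) ^ n) 1
  | Khord : Rel k n q (FreeAlgebra.ι k (1 : Fin 4) ^ n)
      ((FreeAlgebra.ι k (0 : Fin 4) ^ (n - 1)) ^ 2)
  | KKh : Rel k n q (FreeAlgebra.ι k (0 : Fin 4) * FreeAlgebra.ι k (1 : Fin 4))
      (FreeAlgebra.ι k (1 : Fin 4) * FreeAlgebra.ι k (0 : Fin 4))
  | KE : Rel k n q
      (FreeAlgebra.ι k (0 : Fin 4) * FreeAlgebra.ι k (2 : Fin 4) *
        FreeAlgebra.ι k (0 : Fin 4) ^ (n - 1))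
      (q ^ n • FreeAlgebra.ι k (2 : Fin 4))
  | KF : Rel k n q
      (FreeAlgebra.ι k (0 : Fin 4) * FreeAlgebra.ι k (3 : Fin 4) *
        FreeAlgebra.ι k (0 : Fin 4) ^ (n - 1))
      ((q ^ n)⁻¹ • FreeAlgebra.ι k (3 : Fin 4))
  | KhE : Rel k n q
      (FreeAlgebra.ι k (1 : Fin 4) * FreeAlgebra.ι k (2 : Fin 4) *
        FreeAlgebra.ι k (1 : Fin 4) ^ (n ^ 2 - 1))
      ((q ^ n * (q ^ 2)⁻¹) • FreeAlgebra.ι k (2 : Fin 4))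
  | KhF : Rel k n q
      (FreeAlgebra.ι k (1 : Fin 4) * FreeAlgebra.ι k (3 : Fin 4) *
        FreeAlgebra.ι k (1 : Fin 4) ^ (n ^ 2 - 1))
      (((q ^ n)⁻¹ * q ^ 2) • FreeAlgebra.ι k (3 : Fin 4))
  | Enil : Rel k n q (FreeAlgebra.ι k (2 : Fin 4) ^ n ^ 2) 0
  | Fnil : Rel k n q (FreeAlgebra.ι k (3 : Fin 4) ^ n ^ 2) 0
  | EF : Rel k n q
      (FreeAlgebra.ι k (3 : Fin 4) * FreeAlgebra.ι k (2 : Fin 4) -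
        q⁻¹ • (FreeAlgebra.ι k (2 : Fin 4) * FreeAlgebra.ι k (3 : Fin 4)))
      (1 - FreeAlgebra.ι k (0 : Fin 4) ^ (n - 1) * FreeAlgebra.ι k (1 : Fin 4))

/-- The algebra `ũ_q(sl₂)` as the quotient of the free algebra by the defining relations. -/
abbrev U (k : Type) [Field k] (n : ℕ) (q : k) := RingQuot (Rel k n q)

variable (k : Type) [Field k] (n : ℕ) (q : k)

def K : U k n q := RingQuot.mkAlgHom k (Rel k n q) (FreeAlgebra.ι k (0 : Fin 4))
def Kh : U k n q := RingQuot.mkAlgHom k (Rel k n q) (FreeAlgebra.ι k (1 : Fin 4))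
def E : U k n q := RingQuot.mkAlgHom k (Rel k n q) (FreeAlgebra.ι k (2 : Fin 4))
def F : U k n q := RingQuot.mkAlgHom k (Rel k n q) (FreeAlgebra.ι k (3 : Fin 4))

/-- `K⁻¹ = K^(n-1)`. -/
def Kinv : U k n q := K k n q ^ (n - 1)
/-- `K̂⁻¹ = K̂^(n²-1)`. -/
def Khinv : U k n q := Kh k n q ^ (n ^ 2 - 1)

/-- `φ_{2i} = (2/n²) Σ_{t<n²/2} q^{-2it} (K⁻¹K̂)^t`. -/
def phi (i : ℕ) : U k n q :=
  ((n ^ 2 : k)⁻¹ * 2) • ∑ t ∈ Finset.range (n ^ 2 / 2),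
    (q⁻¹ ^ (2 * i * t)) • (Kinv k n q * Kh k n q) ^ t

/-- `𝟙₀ = (1/2)(1 + KK̂^(n/2))` and `𝟙₁ = (1/2)(1 - KK̂^(n/2))`. -/
def oneJ (j : ℕ) : U k n q :=
  if j = 0 then (2 : k)⁻¹ • (1 + K k n q * Kh k n q ^ (n / 2))
  else (2 : k)⁻¹ • (1 - K k n q * Kh k n q ^ (n / 2))

/-- The idempotent `e_{2i,j} = φ_{2i} 𝟙_j`. -/
def eIdem (i j : ℕ) : U k n q := phi k n q i * oneJ k n q j

/-- `α_{2i,j} = F^(n²-1) e_{2i,j}`. -/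
def alpha (i j : ℕ) : U k n q := F k n q ^ (n ^ 2 - 1) * eIdem k n q i j

/-- `β_{2i,j} = E^(2i-2) α_{2i,j}`. -/
def beta (i j : ℕ) : U k n q := E k n q ^ (2 * i - 2) * alpha k n q i j

/-- The Gaussian number `s_q = 1 + q + ⋯ + q^(s-1)`. -/
def gauss (x : k) (s : ℕ) : k := ∑ t ∈ Finset.range s, x ^ t

/-- The span of the PBW-type monomials `F^a K^c K̂^d E^b` with `a ≤ n²-2`, `b ≤ n²-1`,
`c ≤ n-1`, `d ≤ n²-1`. -/
def pbw : Submodule k (U k n q) :=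
  Submodule.span k {x | ∃ a b c d : ℕ, a ≤ n ^ 2 - 2 ∧ b ≤ n ^ 2 - 1 ∧ c ≤ n - 1 ∧
    d ≤ n ^ 2 - 1 ∧ x = F k n q ^ a * K k n q ^ c * Kh k n q ^ d * E k n q ^ b}

/-- `γ_{2i,j}`: the unique element of the PBW span with `F·γ = β_{2i,j}`. -/
def gam (i j : ℕ) : U k n q :=
  @dite _ (∃! x, x ∈ pbw k n q ∧ F k n q * x = beta k n q i j)
    (Classical.propDecidable _) (fun h => h.choose) (fun _ => 0)

/-- The left ideal `P_{2i,j} = u·γ_{2i,j}`. -/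
def P (i j : ℕ) : Submodule (U k n q) (U k n q) :=
  Submodule.span (U k n q) {gam k n q i j}

/-- `S_{2i,j} = Soc(P_{2i,j})`, the sum of all simple submodules of `P_{2i,j}`. -/
def S (i j : ℕ) : Submodule (U k n q) (U k n q) :=
  sSup {N : Submodule (U k n q) (U k n q) | N ≤ P k n q i j ∧ IsSimpleModule (U k n q) N}

end QFL

/-! In terms of `g = K⁻¹K̂` and `c = KK̂^(n/2)`, of independent orders `N / 2` and `2` where
`N = n²`, the algebra `u` has the basis `F ^ a * E ^ b * e_{2i,j}`. Linear independence is seen on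
an explicit representation with basis indexed by `(a, b)`, one for each pair `(i, j)`.

By this basis, the kernel of left multiplication by `F` is `F ^ (N - 1) * B`, where `B` is the Borel
subalgebra, spanned by the elements `E ^ b * e_{2i,j}`. Let `S` be the sum of the left ideals
`P_{2i,j} * E ^ h`. Up to nonzero scalars, `F ^ (N - 1) * E ^ (N - 2i) * γ_{2i,j}` equals
`α_{2i,j} = F ^ (N - 1) * e_{2i,j}`, and `F ^ (N - 1) * E ^ (N - 1) * γ_{2i,j}` equals
`E ^ (2i - 1) * α_{2i,j}`, hence `F ^ (N - 1) * E ^ (2i - 1) * e_{2i,j}`. Multiplying on the right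
by powers of `E`, one sees that `F ^ (N - 1) * S` contains the kernel of `F`, and `S = u` follows by
induction on `r` from the kernels of `F ^ r`.

Finally each `P_{2i,j} * E ^ h` is spanned by two strings of at most `N` vectors, and there are
`2 * (N / 2)²` summands, so their dimensions add up to at most `N³ = dim u` and the sum is
direct. -/

namespace QFL

open Finset

section SkewCommutation

variable {k A : Type*} [CommSemiring k] [Semiring A] [Algebra k A] {a b κ : k} {x y z : A}

/-- `x` and `y` commute up to the scalar `a`. -/
def SkewCommute (a : k) (x y : A) : Prop := x * y = a • (y * x)

namespace SkewCommute

lemma pow_right (h : SkewCommute a x y) (m : ℕ) : SkewCommute (a ^ m) x (y ^ m) := by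
  induction m with
  | zero => simp [SkewCommute]
  | succ m ih =>
    rw [SkewCommute] at *
    rw [pow_succ', ← mul_assoc, h, smul_mul_assoc, mul_assoc, ih, mul_smul_comm, smul_smul,
      ← mul_assoc, ← pow_succ' a]

lemma mul_left (hx : SkewCommute a x z) (hy : SkewCommute b y z) :
    SkewCommute (a * b) (x * y) z := by
  rw [SkewCommute] at *
  rw [mul_assoc, hy, mul_smul_comm, ← mul_assoc, hx, smul_mul_assoc, smul_smul, mul_assoc,
    mul_comm b]

lemma pow_left (h : SkewCommute a x y) (m : ℕ) : SkewCommute (a ^ m) (x ^ m) y := by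
  induction m with
  | zero => simp [SkewCommute]
  | succ m ih => simpa only [pow_succ'] using h.mul_left ih

lemma mul_pow_mul (h : SkewCommute a x y) (hz : x * z = κ • z) (m : ℕ) :
    x * (y ^ m * z) = (a ^ m * κ) • (y ^ m * z) := by
  rw [← mul_assoc, h.pow_right m, smul_mul_assoc, mul_assoc, hz, mul_smul_comm, smul_smul]

end SkewCommute

end SkewCommutation

section GaussianNumbers

variable {k : Type} [Field k]

lemma gauss_succ (x : k) (m : ℕ) : gauss k x (m + 1) = gauss k x m + x ^ m :=
  sum_range_succ _ _

lemma gauss_succ' (x : k) (m : ℕ) : gauss k x (m + 1) = x * gauss k x m + 1 := by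
  rw [gauss, sum_range_succ', gauss, mul_sum]
  simp only [pow_succ', pow_zero]

lemma gauss_ne_zero {x : k} {N m : ℕ} (hx : IsPrimitiveRoot x N) (hm : m ≠ 0) (hmN : m < N) :
    gauss k x m ≠ 0 := fun h0 =>
  hx.pow_ne_one_of_pos_of_lt hm hmN <| by
    rw [← sub_eq_zero, ← mul_geom_sum, ← gauss, h0, mul_zero]

variable {A : Type*} [Ring A] [Algebra k A] {p q : k} {E F g : A}

lemma mul_pow_succ_of_skew (gE : SkewCommute (p ^ 2) g E)
    (FE : F * E = p • (E * F) + (1 - g)) (m : ℕ) :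
    F * E ^ (m + 1) = p ^ (m + 1) • (E ^ (m + 1) * F) +
      gauss k p (m + 1) • (E ^ m * (1 - p ^ m • g)) := by
  induction m with
  | zero => simp [gauss, FE]
  | succ m ih =>
    have gauss_rec : gauss k p (m + 2) = gauss k p (m + 1) + p ^ (m + 1) := gauss_succ _ _
    have gauss_rec' : gauss k p (m + 2) * p ^ (m + 1) =
        p ^ (m + 1) + p ^ (m + 2) * gauss k p (m + 1) := by
      rw [gauss_succ']; ring
    calc F * E ^ (m + 2) = (F * E ^ (m + 1)) * E := by rw [pow_succ, mul_assoc]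
      _ = p ^ (m + 1) • (E ^ (m + 1) * (F * E)) +
          gauss k p (m + 1) • (E ^ (m + 1) - p ^ m • (E ^ m * (g * E))) := by
        rw [ih]
        simp only [add_mul, smul_mul_assoc, mul_assoc, sub_mul, one_mul, mul_sub, mul_smul_comm,
          ← pow_succ]
      _ = p ^ (m + 2) • (E ^ (m + 2) * F) + gauss k p (m + 2) • E ^ (m + 1) -
          (gauss k p (m + 2) * p ^ (m + 1)) • (E ^ (m + 1) * g) := by
        rw [FE, show g * E = p ^ 2 • (E * g) from gE, gauss_rec', gauss_rec, mul_add, mul_sub,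
          mul_one, mul_smul_comm, mul_smul_comm, ← mul_assoc, ← pow_succ, ← mul_assoc, ← pow_succ]
        module
      _ = _ := by
        rw [mul_sub, mul_one, mul_smul_comm, smul_sub, smul_smul, add_sub_assoc]

lemma mul_pow_succ_of_skew' (hq : q ≠ 0) (gF : SkewCommute (q ^ 2) g F)
    (FE : F * E = q⁻¹ • (E * F) + (1 - g)) (m : ℕ) :
    E * F ^ (m + 1) = q ^ (m + 1) • (F ^ (m + 1) * E) -
      (q * gauss k q (m + 1)) • (F ^ m * (1 - q ^ m • g)) := by
  -- `(F, -q⁻¹ • E)` satisfies the hypotheses of `mul_pow_succ_of_skew` imposed on `(E, F)`.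
  have swapped := mul_pow_succ_of_skew (E := F) (F := -q⁻¹ • E) gF
    (by rw [mul_smul_comm, FE, smul_mul_assoc, smul_smul, mul_neg, mul_inv_cancel₀ hq]; module) m
  calc E * F ^ (m + 1) = (-q) • (-q⁻¹ • E * F ^ (m + 1)) := by
        rw [smul_mul_assoc, smul_smul, neg_mul_neg, mul_inv_cancel₀ hq, one_smul]
    _ = q ^ (m + 1) • ((-q * -q⁻¹) • (F ^ (m + 1) * E)) -
        (q * gauss k q (m + 1)) • (F ^ m * (1 - q ^ m • g)) := by
        rw [swapped, mul_smul_comm]; module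
    _ = _ := by rw [neg_mul_neg, mul_inv_cancel₀ hq, one_smul]

end GaussianNumbers

section Eigenprojections

variable {k A : Type*} [Field k] [Ring A] [Algebra k A] {m : ℕ} {g : A}

/-- The projection onto the `κ`-eigenspace of left multiplication by an element `g` with
`g ^ m = 1`; it is meaningful when `κ ^ m = 1` and `m` is invertible in `k`. -/
def eigenProj (m : ℕ) (g : A) (κ : k) : A := (m : k)⁻¹ • ∑ t ∈ range m, (κ⁻¹ • g) ^ t

lemma mul_eigenProj {κ : k} (hg : g ^ m = 1) (hκ : κ ^ m = 1) :
    g * eigenProj m g κ = κ • eigenProj m g κ := by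
  rcases eq_or_ne m 0 with rfl | hm
  · simp [eigenProj]
  have hκ0 : κ ≠ 0 := by rintro rfl; simp [hm] at hκ
  have fixed : (κ⁻¹ • g) * ∑ t ∈ range m, (κ⁻¹ • g) ^ t = ∑ t ∈ range m, (κ⁻¹ • g) ^ t := by
    rw [← sub_eq_zero, ← sub_one_mul, mul_geom_sum, smul_pow, hg, inv_pow, hκ, inv_one, one_smul,
      sub_self]
  rw [eigenProj, mul_smul_comm, smul_comm]
  conv_rhs => rw [← fixed, smul_mul_assoc, smul_smul κ, mul_inv_cancel₀ hκ0, one_smul]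

lemma SkewCommute.mul_eigenProj {a : k} {x : A} (ha : a ≠ 0) (h : SkewCommute a g x) (m : ℕ)
    (κ : k) : x * eigenProj m g κ = eigenProj m g (a * κ) * x := by
  have shift : SemiconjBy x (κ⁻¹ • g) ((a * κ)⁻¹ • g) := by
    rw [SemiconjBy, mul_smul_comm, smul_mul_assoc, show g * x = a • (x * g) from h, smul_smul,
      mul_inv, mul_right_comm, inv_mul_cancel₀ ha, one_mul]
  rw [eigenProj, eigenProj, mul_smul_comm, smul_mul_assoc, mul_sum, sum_mul]
  exact congrArg _ (sum_congr rfl fun t _ => (shift.pow_right t).eq)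

lemma sum_eigenProj {ζ : k} (hζ : IsPrimitiveRoot ζ m) (hm : (m : k) ≠ 0) (g : A) :
    ∑ i ∈ range m, eigenProj m g (ζ ^ i) = 1 := by
  have orthogonality : ∀ t ∈ range m,
      ∑ i ∈ range m, ((ζ ^ i)⁻¹ • g) ^ t = if t = 0 then (m : k) • (1 : A) else 0 := by
    intro t ht
    have : ∀ i, ((ζ ^ i)⁻¹ • g) ^ t = ((ζ⁻¹ ^ t) ^ i) • g ^ t := fun i => by
      rw [smul_pow, ← inv_pow, pow_right_comm]
    simp only [this, ← sum_smul]
    split_ifs with h0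
    · simp [h0]
    · have vanish : (ζ⁻¹ ^ t - 1) * ∑ i ∈ range m, (ζ⁻¹ ^ t) ^ i = 0 := by
        rw [mul_geom_sum, pow_right_comm, hζ.inv.pow_eq_one, one_pow, sub_self]
      rw [(mul_eq_zero.mp vanish).resolve_left
        (sub_ne_zero.mpr (hζ.inv.pow_ne_one_of_pos_of_lt h0 (mem_range.mp ht))), zero_smul]
  have hpos : 0 < m := Nat.pos_of_ne_zero (by rintro rfl; simp at hm)
  simp only [eigenProj]
  rw [← smul_sum, sum_comm, sum_congr rfl orthogonality, sum_ite_eq',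
    if_pos (mem_range.mpr hpos), smul_smul, inv_mul_cancel₀ hm, one_smul]

lemma eigenProj_two_one (g : A) : eigenProj 2 g (1 : k) = (2 : k)⁻¹ • (1 + g) := by
  rw [eigenProj, sum_range_succ, sum_range_one, pow_zero, pow_one, Nat.cast_ofNat, inv_one,
    one_smul]

lemma eigenProj_two_neg_one (g : A) : eigenProj 2 g (-1 : k) = (2 : k)⁻¹ • (1 - g) := by
  rw [eigenProj, sum_range_succ, sum_range_one, pow_zero, pow_one, Nat.cast_ofNat, inv_neg,
    inv_one, neg_one_smul, sub_eq_add_neg]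

end Eigenprojections

lemma mul_mem_of_mem_adjoin {k A : Type*} [CommSemiring k] [Semiring A] [Algebra k A] {s : Set A}
    {V : Submodule k A} (stable : ∀ a ∈ s, ∀ v ∈ V, a * v ∈ V) {a v : A}
    (ha : a ∈ Algebra.adjoin k s) (hv : v ∈ V) : a * v ∈ V := by
  induction ha using Algebra.adjoin_induction generalizing v with
  | mem a ha => exact stable a ha v hv
  | algebraMap r => simpa only [Algebra.algebraMap_eq_smul_one, smul_one_mul] using V.smul_mem r hv
  | add a b _ _ iha ihb => simpa only [add_mul] using V.add_mem (iha hv) (ihb hv)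
  | mul a b _ _ iha ihb => simpa only [mul_assoc] using iha (ihb hv)

section TorusRelations

variable {k : Type} [Field k] {A : Type*} [Ring A] [Algebra k A] {N : ℕ} {q : k} {g c E F : A}

/-- The relations of `ũ_q(sl₂)` in terms of the semisimple generators `g = K⁻¹K̂` and
`c = KK̂^(n/2)`, where `N = n²`. Compared with `K` and `K̂`, the elements `g` and `c` have
independent orders `N / 2` and `2`. -/
structure TorusRelations (N : ℕ) (q : k) (g c E F : A) : Prop where
  g_E : SkewCommute (q⁻¹ ^ 2) g E
  g_F : SkewCommute (q ^ 2) g F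
  c_E : SkewCommute (-1 : k) c E
  c_F : SkewCommute (-1 : k) c F
  commute : Commute g c
  g_pow : g ^ (N / 2) = 1
  c_sq : c ^ 2 = 1
  E_pow : E ^ N = 0
  F_pow : F ^ N = 0
  F_E : F * E = q⁻¹ • (E * F) + (1 - g)

/-- The coefficient of `E ^ m * x` in `F * E ^ (m + 1) * x` when `g * x = q ^ r • x`. -/
def structConst (q : k) (r m : ℕ) : k := gauss k q⁻¹ (m + 1) * (1 - q⁻¹ ^ m * q ^ r)

lemma structConst_self (hq : q ≠ 0) (r : ℕ) : structConst q r r = 0 := by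
  rw [structConst, ← mul_pow, inv_mul_cancel₀ hq, one_pow, sub_self, mul_zero]

lemma structConst_ne_zero (hq : IsPrimitiveRoot q N) {r m : ℕ} (hr : r < N) (hm : m + 1 < N)
    (hmr : m ≠ r) : structConst q r m ≠ 0 := by
  refine mul_ne_zero (gauss_ne_zero hq.inv m.succ_ne_zero hm) (sub_ne_zero.mpr fun h => hmr ?_)
  refine hq.pow_inj (by omega) hr ?_
  have hqm : q ^ m ≠ 0 := pow_ne_zero m (hq.ne_zero (by omega))
  rwa [inv_pow, eq_inv_mul_iff_mul_eq₀ hqm, mul_one] at h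

lemma prod_structConst_ne_zero (hq : IsPrimitiveRoot q N) {r s m : ℕ} (hr : r < N)
    (hs : m + s < N) (h : r < m ∨ m + s ≤ r) :
    ∏ t ∈ range s, structConst q r (m + t) ≠ 0 := by
  refine prod_ne_zero_iff.mpr fun t ht => ?_
  have := mem_range.mp ht
  exact structConst_ne_zero hq hr (by omega) (by omega)

namespace TorusRelations

lemma F_mul_E_pow_succ_mul (T : TorusRelations N q g c E F) {r : ℕ} {x : A}
    (hx : g * x = q ^ r • x) (m : ℕ) :
    F * (E ^ (m + 1) * x) =
      q⁻¹ ^ (m + 1) • (E ^ (m + 1) * (F * x)) + structConst q r m • (E ^ m * x) := by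
  rw [← mul_assoc, mul_pow_succ_of_skew T.g_E T.F_E, structConst]
  simp only [add_mul, smul_mul_assoc, mul_assoc, sub_mul, one_mul, hx, mul_sub, mul_smul_comm]
  module

lemma F_pow_mul_E_pow_mul (T : TorusRelations N q g c E F) {r : ℕ} {x : A}
    (hx : g * x = q ^ r • x) (hFx : F * x = 0) (s m : ℕ) :
    F ^ s * (E ^ (m + s) * x) = (∏ t ∈ range s, structConst q r (m + t)) • (E ^ m * x) := by
  induction s with
  | zero => simp
  | succ s ih =>
    rw [pow_succ, mul_assoc, ← add_assoc, T.F_mul_E_pow_succ_mul hx, hFx, mul_zero, smul_zero,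
      zero_add, mul_smul_comm, ih, smul_smul, prod_range_succ, mul_comm]

end TorusRelations

/-- Two eigenvectors `x, y` of `g` and `c`, of the `g`-eigenvalues carried by the socle and the
top of a projective module `P_{r+2,j}`, such that `F` kills `x` and `F * y` is the last vector
`E ^ r * x` of the simple module generated by `x`. The pair `(α_{2i,j}, γ_{2i,j})` is of this
kind for `r = 2i - 2`. -/
structure LinkedPair (N : ℕ) (q : k) (g c E F : A) (r : ℕ) (x y : A) : Prop where
  le : r + 2 ≤ N
  g_left : g * x = q ^ r • x
  g_right : g * y = q ^ (N - 2 - r) • y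
  c_left : ∃ ε : k, c * x = ε • x
  c_right : ∃ ε : k, c * y = ε • y
  F_left : F * x = 0
  F_right : F * y = E ^ r * x

namespace LinkedPair

variable {r : ℕ} {x y : A}

lemma F_pow_mul_E_pow_mul_right (L : LinkedPair N q g c E F r x y)
    (T : TorusRelations N q g c E F) (s m : ℕ) :
    ∃ d : k, F ^ s * (E ^ (m + s) * y) =
      (∏ t ∈ range s, structConst q (N - 2 - r) (m + t)) • (E ^ m * y) +
        d • (E ^ (m + 1 + r) * x) := by
  induction s with
  | zero => exact ⟨0, by simp⟩
  | succ s ih =>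
    obtain ⟨d, hd⟩ := ih
    have socle := T.F_pow_mul_E_pow_mul L.g_left L.F_left s (m + 1 + r)
    refine ⟨structConst q (N - 2 - r) (m + s) * d +
      q⁻¹ ^ (m + s + 1) * ∏ t ∈ range s, structConst q r (m + 1 + r + t), ?_⟩
    rw [pow_succ, mul_assoc, ← add_assoc, T.F_mul_E_pow_succ_mul L.g_right, L.F_right, mul_add,
      mul_smul_comm, mul_smul_comm, hd, ← mul_assoc (E ^ (m + s + 1)), ← pow_add,
      show m + s + 1 + r = m + 1 + r + s by ring, socle, prod_range_succ]
    module

lemma exists_F_pow_mul_E_pow_mul_eq_left (L : LinkedPair N q g c E F r x y)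
    (T : TorusRelations N q g c E F) (hq : IsPrimitiveRoot q N) :
    ∃ C : k, C ≠ 0 ∧ F ^ (N - 1) * (E ^ (N - 2 - r) * y) = C • x := by
  have := L.le
  have hq0 : q ≠ 0 := hq.ne_zero (by omega)
  obtain ⟨d, descend_y⟩ := L.F_pow_mul_E_pow_mul_right T (N - 2 - r) 0
  have descend_x := T.F_pow_mul_E_pow_mul L.g_left L.F_left r 0
  have cross : F * (E ^ (1 + r) * x) = 0 := by
    rw [add_comm, T.F_mul_E_pow_succ_mul L.g_left, L.F_left, structConst_self hq0]; simp
  refine ⟨_, mul_ne_zero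
    (prod_structConst_ne_zero hq (r := N - 2 - r) (s := N - 2 - r) (m := 0) (by omega) (by omega)
      (by omega))
    (prod_structConst_ne_zero hq (r := r) (s := r) (m := 0) (by omega) (by omega) (by omega)), ?_⟩
  simp only [zero_add, pow_zero, one_mul] at descend_x descend_y ⊢
  rw [show N - 1 = r + (1 + (N - 2 - r)) by omega, pow_add, pow_add, mul_assoc, mul_assoc,
    descend_y, pow_one, mul_add, mul_smul_comm, mul_smul_comm, L.F_right, cross, smul_zero,
    add_zero, mul_smul_comm, descend_x, smul_smul]

lemma exists_F_pow_mul_E_pow_mul_eq_right (L : LinkedPair N q g c E F r x y)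
    (T : TorusRelations N q g c E F) (hq : IsPrimitiveRoot q N) :
    ∃ C : k, C ≠ 0 ∧ F ^ (N - 1) * (E ^ (N - 1) * y) = C • (E ^ (r + 1) * x) := by
  have := L.le
  have hq0 : q ≠ 0 := hq.ne_zero (by omega)
  obtain ⟨d, descend_y⟩ := L.F_pow_mul_E_pow_mul_right T r (N - 2 - r + 1)
  have descend_x := T.F_pow_mul_E_pow_mul L.g_left L.F_left (N - 2 - r) (r + 1)
  have cross : F * (E ^ (N - 2 - r + 1) * y) =
      q⁻¹ ^ (N - 2 - r + 1) • (E ^ (r + 1 + (N - 2 - r)) * x) := by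
    rw [T.F_mul_E_pow_succ_mul L.g_right, structConst_self hq0, zero_smul, add_zero, L.F_right,
      ← mul_assoc, ← pow_add]
    congr 3; omega
  refine ⟨_, mul_ne_zero (mul_ne_zero
    (prod_structConst_ne_zero hq (r := N - 2 - r) (s := r) (m := N - 2 - r + 1) (by omega)
      (by omega) (by omega))
    (pow_ne_zero (N - 2 - r + 1) (inv_ne_zero hq0)))
    (prod_structConst_ne_zero hq (r := r) (s := N - 2 - r) (m := r + 1) (by omega) (by omega)
      (by omega)), ?_⟩
  rw [show N - 2 - r + 1 + 1 + r = N by omega, T.E_pow, zero_mul, smul_zero, add_zero,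
    show N - 2 - r + 1 + r = N - 1 by omega] at descend_y
  rw [show N - 1 = (N - 2 - r) + (1 + r) by omega, pow_add F, pow_add F, mul_assoc, mul_assoc,
    show N - 2 - r + (1 + r) = N - 1 by omega, descend_y, pow_one, mul_smul_comm, cross,
    mul_smul_comm, mul_smul_comm, descend_x, smul_smul, smul_smul]

/-- The span of the vectors `E ^ s * x` and `E ^ s * y`; for a linked pair it contains the left
ideal generated by `y`. -/
def stringSpan (k : Type) [Field k] {A : Type*} [Ring A] [Algebra k A] (N : ℕ) (E x y : A) :
    Submodule k A :=
  Submodule.span k (Set.range (Sum.elim (fun s : Fin N => E ^ (s : ℕ) * x)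
    (fun s : Fin N => E ^ (s : ℕ) * y)))

lemma finrank_stringSpan_le (N : ℕ) (E x y : A) :
    Module.finrank k (stringSpan k N E x y) ≤ 2 * N := by
  refine (finrank_range_le_card _).trans_eq ?_
  rw [Fintype.card_sum, Fintype.card_fin, two_mul]

lemma E_pow_mul_mem_stringSpan (hE : E ^ N = 0) (s : ℕ) :
    E ^ s * x ∈ stringSpan k N E x y ∧ E ^ s * y ∈ stringSpan k N E x y := by
  rcases lt_or_ge s N with hs | hs
  · exact ⟨Submodule.subset_span ⟨.inl ⟨s, hs⟩, rfl⟩, Submodule.subset_span ⟨.inr ⟨s, hs⟩, rfl⟩⟩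
  · simp [pow_eq_zero_of_le hs hE]

lemma mul_mem_stringSpan (L : LinkedPair N q g c E F r x y) (T : TorusRelations N q g c E F) :
    ∀ a ∈ ({g, c, E, F} : Set A), ∀ v ∈ stringSpan k N E x y, a * v ∈ stringSpan k N E x y := by
  have mem_x : ∀ s, E ^ s * x ∈ stringSpan k N E x y := fun s =>
    (E_pow_mul_mem_stringSpan T.E_pow s).1
  have mem_y : ∀ s, E ^ s * y ∈ stringSpan k N E x y := fun s =>
    (E_pow_mul_mem_stringSpan T.E_pow s).2
  suffices h : ∀ a ∈ ({g, c, E, F} : Set A), ∀ s,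
      a * (E ^ s * x) ∈ stringSpan k N E x y ∧ a * (E ^ s * y) ∈ stringSpan k N E x y by
    intro a ha v hv
    refine (Submodule.span_le.mpr ?_ : _ ≤ (stringSpan k N E x y).comap (LinearMap.mulLeft k a)) hv
    rintro _ ⟨s | s, rfl⟩
    exacts [(h a ha s).1, (h a ha s).2]
  obtain ⟨ε, hεx⟩ := L.c_left
  obtain ⟨δ, hδy⟩ := L.c_right
  rintro a (rfl | rfl | rfl | rfl) s
  · rw [T.g_E.mul_pow_mul L.g_left, T.g_E.mul_pow_mul L.g_right]
    exact ⟨Submodule.smul_mem _ _ (mem_x s), Submodule.smul_mem _ _ (mem_y s)⟩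
  · rw [T.c_E.mul_pow_mul hεx, T.c_E.mul_pow_mul hδy]
    exact ⟨Submodule.smul_mem _ _ (mem_x s), Submodule.smul_mem _ _ (mem_y s)⟩
  · rw [← mul_assoc, ← mul_assoc, ← pow_succ']
    exact ⟨mem_x _, mem_y _⟩
  · cases s with
    | zero =>
      rw [pow_zero, one_mul, one_mul, L.F_left, L.F_right]
      exact ⟨Submodule.zero_mem _, mem_x r⟩
    | succ s =>
      rw [T.F_mul_E_pow_succ_mul L.g_left, T.F_mul_E_pow_succ_mul L.g_right, L.F_left, L.F_right,
        mul_zero, ← mul_assoc, ← pow_add]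
      exact ⟨Submodule.add_mem _ (by simp) (Submodule.smul_mem _ _ (mem_x s)),
        Submodule.add_mem _ (Submodule.smul_mem _ _ (mem_x _)) (Submodule.smul_mem _ _ (mem_y s))⟩

end LinkedPair

end TorusRelations

section WeightProjections

variable {k : Type} [Field k] {A : Type*} [Ring A] [Algebra k A] {N : ℕ} {q : k} {g c E F : A}

/-- The projection onto the common eigenspace of `g` and `c` with eigenvalues `q ^ (2 * i)` and
`(-1) ^ j`; it is the idempotent `e_{2i,j}`, but with arbitrary natural indices. -/
def weightProj (N : ℕ) (q : k) (g c : A) (i j : ℕ) : A :=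
  eigenProj (N / 2) g (q ^ (2 * i)) * eigenProj 2 c ((-1 : k) ^ j)

lemma pow_two_mul_pow_half (hq : IsPrimitiveRoot q N) (hN : 2 ∣ N) (i : ℕ) :
    (q ^ (2 * i)) ^ (N / 2) = 1 := by
  rw [← pow_mul, mul_right_comm, Nat.mul_div_cancel' hN, pow_mul, hq.pow_eq_one, one_pow]

lemma neg_one_pow_sq (j : ℕ) : ((-1 : k) ^ j) ^ 2 = 1 := by
  rw [pow_right_comm, neg_one_sq, one_pow]

lemma weightProj_mod (hq : IsPrimitiveRoot q N) (hN : 2 ∣ N) (i j : ℕ) :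
    weightProj N q g c (i % (N / 2)) (j % 2) = weightProj N q g c i j := by
  have hζ : (q ^ 2) ^ (N / 2) = 1 := pow_two_mul_pow_half hq hN 1
  rw [weightProj, weightProj, ← neg_one_pow_eq_pow_mod_two, pow_mul, ← pow_eq_pow_mod i hζ, pow_mul]

lemma two_mul_half_cast_ne_zero (hq : IsPrimitiveRoot q N) (hN0 : 0 < N) (hN : 2 ∣ N) :
    (2 : k) * (N / 2 : ℕ) ≠ 0 := by
  have : NeZero N := ⟨hN0.ne'⟩
  have := hq.neZero'
  exact_mod_cast (Nat.mul_div_cancel' hN).symm ▸ this.out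

lemma isPrimitiveRoot_neg_one_two (h2 : (2 : k) ≠ 0) : IsPrimitiveRoot (-1 : k) 2 :=
  .neg_one (ringChar k) fun h => h2 (by exact_mod_cast h ▸ ringChar.Nat.cast_ringChar)

lemma sum_weightProj (hN0 : 0 < N) (hN : 2 ∣ N) (hq : IsPrimitiveRoot q N) (g c : A) :
    ∑ i ∈ range (N / 2), ∑ j ∈ range 2, weightProj N q g c i j = 1 := by
  obtain ⟨h2, hN2⟩ := mul_ne_zero_iff.mp (two_mul_half_cast_ne_zero hq hN0 hN)
  have hζ : IsPrimitiveRoot (q ^ 2) (N / 2) := hq.pow hN0 (Nat.mul_div_cancel' hN).symm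
  simp only [weightProj, pow_mul, ← mul_sum, ← sum_mul]
  rw [sum_eigenProj hζ hN2, sum_eigenProj (isPrimitiveRoot_neg_one_two h2) (by exact_mod_cast h2),
    one_mul]

namespace TorusRelations

lemma g_mul_weightProj (T : TorusRelations N q g c E F) (hq : IsPrimitiveRoot q N) (hN : 2 ∣ N)
    (i j : ℕ) : g * weightProj N q g c i j = q ^ (2 * i) • weightProj N q g c i j := by
  rw [weightProj, ← mul_assoc, mul_eigenProj T.g_pow (pow_two_mul_pow_half hq hN i),
    smul_mul_assoc]

lemma c_mul_weightProj (T : TorusRelations N q g c E F) (i j : ℕ) :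
    c * weightProj N q g c i j = (-1 : k) ^ j • weightProj N q g c i j := by
  have comm : Commute c (eigenProj (N / 2) g (q ^ (2 * i))) := by
    have h : SkewCommute (1 : k) g c := by rw [SkewCommute, one_smul, T.commute.eq]
    rw [Commute, SemiconjBy, h.mul_eigenProj one_ne_zero, one_mul]
  rw [weightProj, ← mul_assoc, comm.eq, mul_assoc, mul_eigenProj T.c_sq (neg_one_pow_sq j),
    mul_smul_comm]

lemma weightProj_mul_E_pow (T : TorusRelations N q g c E F) (hq : q ≠ 0) (i j m : ℕ) :
    weightProj N q g c i j * E ^ m = E ^ m * weightProj N q g c (i + m) (j + m) := by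
  rw [weightProj, weightProj, ← mul_assoc,
    (T.g_E.pow_right m).mul_eigenProj (pow_ne_zero _ (pow_ne_zero _ (inv_ne_zero hq))), mul_assoc,
    mul_assoc, (T.c_E.pow_right m).mul_eigenProj (pow_ne_zero _ (neg_ne_zero.mpr one_ne_zero))]
  congr 3
  · rw [mul_add, pow_add, ← pow_mul, inv_pow, mul_comm (q ^ (2 * i)),
      inv_mul_cancel_left₀ (pow_ne_zero _ hq)]
  · rw [pow_add, mul_left_comm, ← mul_pow, neg_one_mul, neg_neg, one_pow, mul_one]

end TorusRelations

end WeightProjections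

/-- A presentation of an algebra by semisimple generators `g, c` and nilpotent generators `E, F`
satisfying `TorusRelations`, for which the expected PBW family is linearly independent. It isolates
what the decomposition of `ũ_q(sl₂)` depends on; there, `N = n²`. -/
structure FLPresentation (k : Type) [Field k] (A : Type*) [Ring A] [Algebra k A] where
  N : ℕ
  q : k
  g : A
  c : A
  E : A
  F : A
  pos : 0 < N
  two_dvd : 2 ∣ N
  primitive : IsPrimitiveRoot q N
  rel : TorusRelations N q g c E F
  adjoin_eq_top : Algebra.adjoin k {g, c, E, F} = ⊤
  linearIndependent : LinearIndependent k fun t : Fin N × Fin N × Fin (N / 2) × Fin 2 =>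
    F ^ (t.1 : ℕ) * (E ^ (t.2.1 : ℕ) * weightProj N q g c t.2.2.1 t.2.2.2)

namespace FLPresentation

variable {k : Type} [Field k] {A : Type*} [Ring A] [Algebra k A] (D : FLPresentation k A)

lemma two_le : 2 ≤ D.N := Nat.le_of_dvd D.pos D.two_dvd

lemma q_ne_zero : D.q ≠ 0 := D.primitive.ne_zero D.pos.ne'

/-- The idempotent `e_{2i,j}`, with arbitrary natural indices. -/
abbrev e (i j : ℕ) : A := weightProj D.N D.q D.g D.c i j

/-- The Borel subalgebra, generated by `g`, `c` and `E`. -/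
def borel : Subalgebra k A := Algebra.adjoin k {D.g, D.c, D.E}

lemma g_mem_borel : D.g ∈ D.borel := Algebra.subset_adjoin (by simp)

lemma c_mem_borel : D.c ∈ D.borel := Algebra.subset_adjoin (by simp)

lemma E_mem_borel : D.E ∈ D.borel := Algebra.subset_adjoin (by simp)

lemma e_mem_borel (i j : ℕ) : D.e i j ∈ D.borel := by
  have eigenProj_mem : ∀ {z : A}, z ∈ D.borel → ∀ m (κ : k), eigenProj m z κ ∈ D.borel :=
    fun hz m κ => D.borel.smul_mem (sum_mem fun t _ => pow_mem (D.borel.smul_mem hz _) t) _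
  exact mul_mem (eigenProj_mem D.g_mem_borel _ _) (eigenProj_mem D.c_mem_borel _ _)

lemma e_mod (i j : ℕ) : D.e (i % (D.N / 2)) (j % 2) = D.e i j :=
  weightProj_mod D.primitive D.two_dvd i j

lemma one_mem_of_e_mem {V : Submodule k A} (h : ∀ i < D.N / 2, ∀ j < 2, D.e i j ∈ V) : 1 ∈ V := by
  rw [← sum_weightProj D.pos D.two_dvd D.primitive D.g D.c]
  exact sum_mem fun i hi => sum_mem fun j hj => h i (mem_range.mp hi) j (mem_range.mp hj)

lemma borel_le {V : Submodule k A}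
    (h : ∀ b < D.N, ∀ i < D.N / 2, ∀ j < 2, D.E ^ b * D.e i j ∈ V) :
    Subalgebra.toSubmodule D.borel ≤ V := by
  set W := Submodule.span k
    {x | ∃ b < D.N, ∃ i < D.N / 2, ∃ j < 2, D.E ^ b * D.e i j = x}
  have W_le : W ≤ V := Submodule.span_le.mpr <| by
    rintro _ ⟨b, hb, i, hi, j, hj, rfl⟩
    exact h b hb i hi j hj
  have mem_W : ∀ b i j, D.E ^ b * D.e i j ∈ W := fun b i j => by
    rcases lt_or_ge b D.N with hb | hb
    · rw [← e_mod]
      exact Submodule.subset_span ⟨b, hb, _, Nat.mod_lt _ (by have := D.two_le; omega), _,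
        Nat.mod_lt _ two_pos, rfl⟩
    · rw [pow_eq_zero_of_le hb D.rel.E_pow, zero_mul]
      exact W.zero_mem
  have stable : ∀ a ∈ ({D.g, D.c, D.E} : Set A), ∀ v ∈ W, a * v ∈ W := by
    intro a ha v hv
    refine (Submodule.span_le.mpr ?_ : W ≤ W.comap (LinearMap.mulLeft k a)) hv
    rintro _ ⟨b, -, i, -, j, -, rfl⟩
    rw [SetLike.mem_coe, Submodule.mem_comap, LinearMap.mulLeft_apply]
    rcases ha with rfl | rfl | rfl
    · rw [D.rel.g_E.mul_pow_mul (D.rel.g_mul_weightProj D.primitive D.two_dvd i j)]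
      exact W.smul_mem _ (mem_W b i j)
    · rw [D.rel.c_E.mul_pow_mul (D.rel.c_mul_weightProj i j)]
      exact W.smul_mem _ (mem_W b i j)
    · rw [← mul_assoc, ← pow_succ']
      exact mem_W (b + 1) i j
  have one_mem : 1 ∈ W := D.one_mem_of_e_mem fun i _ j _ => by simpa using mem_W 0 i j
  intro y hy
  simpa using W_le (mul_mem_of_mem_adjoin stable hy one_mem)

/-- The subspace `∑_{a < r} F ^ a * borel`. For `r = N - 1` it is the PBW span on which left
multiplication by `F` is injective and to which the elements `γ_{2i,j}` belong. -/
def filtration (r : ℕ) : Submodule k A :=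
  Submodule.span k {x | ∃ a < r, ∃ y ∈ D.borel, D.F ^ a * y = x}

variable {D} {r a : ℕ} {x y : A}

lemma F_pow_mul_mem_filtration (ha : a < r) (hy : y ∈ D.borel) :
    D.F ^ a * y ∈ D.filtration r :=
  Submodule.subset_span ⟨a, ha, y, hy, rfl⟩

lemma filtration_le {V : Submodule k A} (h : ∀ a < r, ∀ y ∈ D.borel, D.F ^ a * y ∈ V) :
    D.filtration r ≤ V :=
  Submodule.span_le.mpr <| by rintro _ ⟨a, ha, y, hy, rfl⟩; exact h a ha y hy

lemma filtration_mono {s : ℕ} (h : r ≤ s) : D.filtration r ≤ D.filtration s :=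
  filtration_le fun _ ha _ hy => F_pow_mul_mem_filtration (ha.trans_le h) hy

lemma mul_mem_filtration_of_skewCommute {z : A} {κ : k} (hz : z ∈ D.borel)
    (h : SkewCommute κ z D.F) (hx : x ∈ D.filtration r) : z * x ∈ D.filtration r := by
  refine (filtration_le fun a ha y hy => ?_ :
    D.filtration r ≤ (D.filtration r).comap (LinearMap.mulLeft k z)) hx
  rw [Submodule.mem_comap, LinearMap.mulLeft_apply, ← mul_assoc, h.pow_right a, smul_mul_assoc,
    mul_assoc]
  exact Submodule.smul_mem _ _ (F_pow_mul_mem_filtration ha (mul_mem hz hy))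

lemma E_mul_F_pow_mul_sub_mem (a : ℕ) (hy : y ∈ D.borel) :
    D.E * (D.F ^ a * y) - D.q ^ a • (D.F ^ a * (D.E * y)) ∈ D.filtration a := by
  cases a with
  | zero => simp
  | succ a =>
    have lower : (1 - D.q ^ a • D.g) * y ∈ D.borel :=
      mul_mem (sub_mem (one_mem _) (D.borel.smul_mem D.g_mem_borel _)) hy
    rw [← mul_assoc, mul_pow_succ_of_skew' D.q_ne_zero D.rel.g_F D.rel.F_E, sub_mul,
      smul_mul_assoc, smul_mul_assoc, mul_assoc, sub_sub_cancel_left, mul_assoc]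
    exact Submodule.neg_mem _
      (Submodule.smul_mem _ _ (F_pow_mul_mem_filtration a.lt_succ_self lower))

lemma E_mul_mem_filtration (hx : x ∈ D.filtration r) : D.E * x ∈ D.filtration r := by
  refine (filtration_le fun a ha y hy => ?_ :
    D.filtration r ≤ (D.filtration r).comap (LinearMap.mulLeft k D.E)) hx
  have leading : D.q ^ a • (D.F ^ a * (D.E * y)) ∈ D.filtration r :=
    Submodule.smul_mem _ _ (F_pow_mul_mem_filtration ha (mul_mem D.E_mem_borel hy))
  simpa using add_mem (filtration_mono ha.le (E_mul_F_pow_mul_sub_mem a hy)) leading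

lemma F_mul_mem_filtration (hx : x ∈ D.filtration D.N) : D.F * x ∈ D.filtration D.N := by
  refine (filtration_le fun a ha y hy => ?_ :
    D.filtration D.N ≤ (D.filtration D.N).comap (LinearMap.mulLeft k D.F)) hx
  rw [Submodule.mem_comap, LinearMap.mulLeft_apply, ← mul_assoc, ← pow_succ']
  rcases (Nat.succ_le_of_lt ha).lt_or_eq with h | h
  · exact F_pow_mul_mem_filtration h hy
  · rw [← Nat.succ_eq_add_one, h, D.rel.F_pow, zero_mul]
    exact Submodule.zero_mem _

lemma filtration_eq_top : D.filtration D.N = ⊤ := by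
  have one_mem : (1 : A) ∈ D.filtration D.N := by
    simpa using F_pow_mul_mem_filtration D.pos (one_mem D.borel)
  refine eq_top_iff.mpr fun x _ => ?_
  have hx : x ∈ Algebra.adjoin k {D.g, D.c, D.E, D.F} := D.adjoin_eq_top ▸ Algebra.mem_top
  rw [← mul_one x]
  refine mul_mem_of_mem_adjoin (fun z hz v hv => ?_) hx one_mem
  rcases hz with rfl | rfl | rfl | rfl
  · exact mul_mem_filtration_of_skewCommute D.g_mem_borel D.rel.g_F hv
  · exact mul_mem_filtration_of_skewCommute D.c_mem_borel D.rel.c_F hv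
  · exact E_mul_mem_filtration hv
  · exact F_mul_mem_filtration hv

lemma exists_eq_add_F_pow_mul (D : FLPresentation k A) (x : A) :
    ∃ p ∈ D.filtration (D.N - 1), ∃ y ∈ D.borel, x = p + D.F ^ (D.N - 1) * y := by
  have h : D.filtration D.N ≤ D.filtration (D.N - 1) ⊔
      (Subalgebra.toSubmodule D.borel).map (LinearMap.mulLeft k (D.F ^ (D.N - 1))) := by
    refine filtration_le fun a ha y hy => ?_
    rcases (Nat.le_sub_one_of_lt ha).lt_or_eq with h | rfl
    · exact Submodule.mem_sup_left (F_pow_mul_mem_filtration h hy)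
    · exact Submodule.mem_sup_right ⟨y, hy, rfl⟩
  rw [filtration_eq_top] at h
  obtain ⟨p, hp, z, ⟨y, hy, rfl⟩, hx⟩ := Submodule.mem_sup.mp (h (Submodule.mem_top (x := x)))
  exact ⟨p, hp, y, hy, hx.symm⟩

lemma F_mul_F_pow_mul (D : FLPresentation k A) (x : A) : D.F * (D.F ^ (D.N - 1) * x) = 0 := by
  rw [← mul_assoc, ← pow_succ', Nat.sub_add_cancel D.pos, D.rel.F_pow, zero_mul]

lemma eq_zero_of_F_mul_eq_zero (hx : x ∈ D.filtration (D.N - 1)) (h : D.F * x = 0) : x = 0 := by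
  let v : Fin (D.N - 1) × Fin D.N × Fin (D.N / 2) × Fin 2 → A := fun t =>
    D.F ^ (t.1 : ℕ) * (D.E ^ (t.2.1 : ℕ) * D.e t.2.2.1 t.2.2.2)
  have mem_span : x ∈ Submodule.span k (Set.range v) := by
    refine (filtration_le fun a ha y hy => ?_ : _ ≤ Submodule.span k (Set.range v)) hx
    refine (D.borel_le fun b hb i hi j hj => ?_ : _ ≤
      (Submodule.span k (Set.range v)).comap (LinearMap.mulLeft k (D.F ^ a))) hy
    exact Submodule.subset_span ⟨(⟨a, ha⟩, ⟨b, hb⟩, ⟨i, hi⟩, ⟨j, hj⟩), rfl⟩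
  have independent : LinearIndependent k (LinearMap.mulLeft k D.F ∘ v) := by
    convert D.linearIndependent.comp
      (fun t : Fin (D.N - 1) × Fin D.N × Fin (D.N / 2) × Fin 2 =>
        ((⟨t.1 + 1, by omega⟩ : Fin D.N), t.2))
      (by rintro ⟨⟨a, ha⟩, s⟩ ⟨⟨b, hb⟩, t⟩ h; simpa using h) using 1
    funext t
    simp only [v, Function.comp_apply, LinearMap.mulLeft_apply, ← mul_assoc, ← pow_succ']
  exact Submodule.disjoint_def.mp (Submodule.range_ker_disjoint independent) x mem_span (by simpa)

lemma eq_of_F_mul_eq {x' : A} (hx : x ∈ D.filtration (D.N - 1)) (hx' : x' ∈ D.filtration (D.N - 1))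
    (h : D.F * x = D.F * x') : x = x' :=
  sub_eq_zero.mp (eq_zero_of_F_mul_eq_zero (sub_mem hx hx') (by rw [mul_sub, h, sub_self]))

lemma exists_eq_F_pow_mul (h : D.F * x = 0) : ∃ y ∈ D.borel, x = D.F ^ (D.N - 1) * y := by
  obtain ⟨p, hp, y, hy, rfl⟩ := D.exists_eq_add_F_pow_mul x
  rw [mul_add, D.F_mul_F_pow_mul, add_zero] at h
  exact ⟨y, hy, by rw [eq_zero_of_F_mul_eq_zero hp h, zero_add]⟩

lemma E_pow_mul_F_pow_mul_sub_mem (a m : ℕ) (hy : y ∈ D.borel) :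
    D.E ^ m * (D.F ^ a * y) - (D.q ^ a) ^ m • (D.F ^ a * (D.E ^ m * y)) ∈ D.filtration a := by
  induction m with
  | zero => simp
  | succ m ih =>
    have leading := Submodule.smul_mem _ ((D.q ^ a) ^ m)
      (E_mul_F_pow_mul_sub_mem a (mul_mem (pow_mem D.E_mem_borel m) hy))
    convert add_mem (E_mul_mem_filtration ih) leading using 1
    simp only [mul_sub, mul_smul_comm, pow_succ', mul_assoc, smul_sub, smul_smul]
    rw [sub_add_sub_cancel, mul_comm]

lemma E_pow_mul_F_pow_mul (m : ℕ) (hy : y ∈ D.borel)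
    (h : D.F * (D.E ^ m * (D.F ^ (D.N - 1) * y)) = 0) :
    D.E ^ m * (D.F ^ (D.N - 1) * y) =
      (D.q ^ (D.N - 1)) ^ m • (D.F ^ (D.N - 1) * (D.E ^ m * y)) := by
  refine sub_eq_zero.mp (eq_zero_of_F_mul_eq_zero (E_pow_mul_F_pow_mul_sub_mem _ m hy) ?_)
  rw [mul_sub, h, mul_smul_comm, F_mul_F_pow_mul, smul_zero, sub_zero]

lemma exists_E_pow_mul_F_pow_mul_eq (D : FLPresentation k A) (a m : ℕ) (x : A) :
    ∃ y, D.E ^ m * (D.F ^ (a + m) * x) = D.F ^ a * y := by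
  induction m generalizing a with
  | zero => exact ⟨x, by simp⟩
  | succ m ih =>
    obtain ⟨y, hy⟩ := ih (a + 1)
    refine ⟨D.q ^ (a + 1) • (D.F * (D.E * y)) -
      (D.q * gauss k D.q (a + 1)) • ((1 - D.q ^ a • D.g) * y), ?_⟩
    rw [show a + (m + 1) = a + 1 + m by ring, pow_succ', mul_assoc, hy, ← mul_assoc,
      mul_pow_succ_of_skew' D.q_ne_zero D.rel.g_F D.rel.F_E]
    simp only [sub_mul, mul_sub, mul_smul_comm, smul_mul_assoc, pow_succ D.F, mul_assoc]

theorem existsUnique_F_mul_eq (D : FLPresentation k A) {r : ℕ} (hr : r + 2 ≤ D.N) (x : A) :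
    ∃! y, y ∈ D.filtration (D.N - 1) ∧ D.F * y = D.E ^ r * (D.F ^ (D.N - 1) * x) := by
  obtain ⟨y, hy⟩ := D.exists_E_pow_mul_F_pow_mul_eq (D.N - 2 - r + 1) r x
  rw [show D.N - 2 - r + 1 + r = D.N - 1 by omega, pow_succ', mul_assoc] at hy
  obtain ⟨p, hp, z, -, hz⟩ := D.exists_eq_add_F_pow_mul (D.F ^ (D.N - 2 - r) * y)
  have hFp : D.F * p = D.E ^ r * (D.F ^ (D.N - 1) * x) := by
    rw [hy, hz, mul_add, F_mul_F_pow_mul, add_zero]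
  exact ⟨p, ⟨hp, hFp⟩, fun p' hp' => eq_of_F_mul_eq hp'.1 hp (hp'.2.trans hFp.symm)⟩

end FLPresentation

section Decomposition

lemma exists_add_modEq {m : ℕ} (hm : 0 < m) (a b i : ℕ) :
    ∃ i', a ≤ i' ∧ i' < a + m ∧ i' + b ≡ i [MOD m] := by
  obtain ⟨m, rfl⟩ : ∃ l, m = l + 1 := ⟨m - 1, by omega⟩
  set x := i + m * (a + b)
  refine ⟨a + x % (m + 1), by omega, by have := x.mod_lt hm; omega, ?_⟩
  calc a + x % (m + 1) + b ≡ a + x + b [MOD m + 1] :=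
        ((x.mod_modEq (m + 1)).add_left a).add_right b
    _ = i + (m + 1) * (a + b) := by ring
    _ ≡ i [MOD m + 1] := Nat.ModEq.symm (Nat.left_modEq_add_iff.mpr (dvd_mul_right _ _))

lemma eq_top_of_forall_mul_eq_zero {A : Type*} [Ring A] {F : A} {N : ℕ} (hF : F ^ N = 0)
    {S : Submodule A A} (h : ∀ x, F * x = 0 → ∃ m ∈ S, F ^ (N - 1) * m = x) : S = ⊤ := by
  suffices ker_le : ∀ r ≤ N, ∀ x, F ^ r * x = 0 → x ∈ S from
    eq_top_iff.mpr fun x _ => ker_le N le_rfl x (by rw [hF, zero_mul])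
  intro r
  induction r with
  | zero => intro _ x hx; simp_all
  | succ r ih =>
    intro hr x hx
    obtain ⟨m, hm, hFm⟩ := h (F ^ r * x) (by rw [← mul_assoc, ← pow_succ', hx])
    rw [show N - 1 = r + (N - 1 - r) by omega, pow_add, mul_assoc] at hFm
    have difference := ih (by omega) (x - F ^ (N - 1 - r) * m) (by rw [mul_sub, hFm, sub_self])
    exact (S.sub_mem_iff_left (S.smul_mem _ hm)).mp difference

lemma isInternal_of_iSup_eq_top {k A M ι κ : Type*} [Field k] [Ring A] [AddCommGroup M]
    [Algebra k A] [Module k M] [Module A M] [IsScalarTower k A M] [Fintype ι] [DecidableEq ι]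
    [Fintype κ] {S : ι → Submodule A M} [∀ i, Module.Finite k (S i)] (htop : ⨆ i, S i = ⊤)
    {v : κ → M} (hv : LinearIndependent k v)
    (hdim : ∑ i, Module.finrank k (S i) ≤ Fintype.card κ) : DirectSum.IsInternal S := by
  let f := (DirectSum.coeLinearMap S).restrictScalars k
  have surjective : Function.Surjective f := by
    rw [← DirectSum.range_coeLinearMap] at htop
    exact fun x => LinearMap.range_eq_top.mp htop x
  have : Module.Finite k M := .of_surjective f surjective
  have finrank_eq : Module.finrank k (DirectSum ι fun i => S i) = Module.finrank k M :=
    le_antisymm ((Module.finrank_directSum _ _).trans_le (hdim.trans hv.fintype_card_le_finrank))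
      (LinearMap.finrank_le_finrank_of_surjective surjective)
  exact ⟨(LinearMap.injective_iff_surjective_of_finrank_eq_finrank finrank_eq).mpr surjective,
    surjective⟩

/-- The triples `(i, j, h)` indexing the summands `P_{2i,j}E^h`. -/
abbrev SummandIndex (N : ℕ) : Type :=
  {t : ℕ × ℕ × ℕ // 1 ≤ t.1 ∧ t.1 ≤ N / 2 ∧ t.2.1 ≤ 1 ∧ t.2.2 ≤ N - 2 * t.1}

lemma exists_injective_summandIndex {N : ℕ} (hN : 2 ∣ N) :
    ∃ f : SummandIndex N → Fin 2 × Fin (N / 2) × Fin (N / 2), Function.Injective f := by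
  -- The `N - 2 * i + 1` values of `h` fill the hook `{(a, b) | max a b = N / 2 - i}`.
  refine ⟨fun t => (⟨t.1.2.1, by have := t.2; omega⟩,
    ⟨if t.1.2.2 ≤ N / 2 - t.1.1 then N / 2 - t.1.1 else t.1.2.2 - (N / 2 - t.1.1) - 1,
      by have := t.2; split_ifs <;> omega⟩,
    ⟨if t.1.2.2 ≤ N / 2 - t.1.1 then t.1.2.2 else N / 2 - t.1.1,
      by have := t.2; split_ifs <;> omega⟩), ?_⟩
  rintro ⟨⟨i, j, h⟩, ht⟩ ⟨⟨i', j', h'⟩, ht'⟩ heq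
  simp only [Prod.mk.injEq, Fin.mk.injEq, Subtype.mk.injEq] at heq ht ht' ⊢
  split_ifs at heq <;> omega

/-- The left ideal `P E^h`, where `P` is the left ideal generated by `y`. -/
abbrev summand {A : Type*} [Ring A] (E y : A) (h : ℕ) : Submodule A A :=
  Submodule.map (LinearMap.toSpanSingleton A A (E ^ h)) (Submodule.span A {y})

lemma mul_mul_pow_mem_summand {A : Type*} [Ring A] (E y : A) (h : ℕ) (x : A) :
    x * y * E ^ h ∈ summand E y h :=
  ⟨x * y, Submodule.smul_mem _ x (Submodule.mem_span_singleton_self y), rfl⟩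

namespace FLPresentation

variable {k : Type} [Field k] {A : Type*} [Ring A] [Algebra k A] {D : FLPresentation k A}

lemma e_congr {i i' j j' : ℕ} (hi : i ≡ i' [MOD D.N / 2]) (hj : j ≡ j' [MOD 2]) :
    D.e i j = D.e i' j' := by
  rw [← e_mod, hi, hj, e_mod]

lemma mul_eq_smul_of_mul_F_mul {z y : A} {κ μ : k} (hz : z ∈ D.borel) (h : SkewCommute κ z D.F)
    (hκ : κ ≠ 0) (hy : y ∈ D.filtration (D.N - 1)) (hFy : z * (D.F * y) = μ • (D.F * y)) :
    z * y = (κ⁻¹ * μ) • y := by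
  have F_z : D.F * z = κ⁻¹ • (z * D.F) := by
    rw [show z * D.F = κ • (D.F * z) from h, smul_smul, inv_mul_cancel₀ hκ, one_smul]
  refine eq_of_F_mul_eq (mul_mem_filtration_of_skewCommute hz h hy) (Submodule.smul_mem _ _ hy) ?_
  rw [← mul_assoc, F_z, smul_mul_assoc, mul_assoc, hFy, smul_smul, mul_smul_comm]

/-- The defining property of the element `γ_{2i,j}`. -/
structure IsGamma (D : FLPresentation k A) (i j : ℕ) (y : A) : Prop where
  mem : y ∈ D.filtration (D.N - 1)
  F_mul : D.F * y = D.E ^ (2 * i - 2) * (D.F ^ (D.N - 1) * D.e i j)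

lemma g_mul_F_pow_mul_e {i : ℕ} (hi : 1 ≤ i) (j : ℕ) :
    D.g * (D.F ^ (D.N - 1) * D.e i j) = D.q ^ (2 * i - 2) • (D.F ^ (D.N - 1) * D.e i j) := by
  rw [D.rel.g_F.mul_pow_mul (D.rel.g_mul_weightProj D.primitive D.two_dvd i j), ← pow_mul,
    ← pow_add, show 2 * (D.N - 1) + 2 * i = D.N * 2 + (2 * i - 2) by have := D.pos; omega, pow_add,
    pow_mul, D.primitive.pow_eq_one, one_pow, one_mul]

lemma c_mul_F_pow_mul_e (i j : ℕ) : D.c * (D.F ^ (D.N - 1) * D.e i j) =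
    ((-1) ^ (D.N - 1) * (-1) ^ j : k) • (D.F ^ (D.N - 1) * D.e i j) :=
  D.rel.c_F.mul_pow_mul (D.rel.c_mul_weightProj i j) _

namespace IsGamma

variable {i j : ℕ} {y : A}

lemma linkedPair (G : D.IsGamma i j y) (hi : 1 ≤ i) (hiN : i ≤ D.N / 2) :
    LinkedPair D.N D.q D.g D.c D.E D.F (2 * i - 2) (D.F ^ (D.N - 1) * D.e i j) y where
  le := by omega
  g_left := g_mul_F_pow_mul_e hi j
  g_right := by
    have eigenvalue : (D.q ^ 2)⁻¹ * ((D.q⁻¹ ^ 2) ^ (2 * i - 2) * D.q ^ (2 * i - 2)) =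
        D.q ^ (D.N - 2 - (2 * i - 2)) := by
      have hq := D.q_ne_zero
      obtain ⟨i, rfl⟩ : ∃ l, i = l + 1 := ⟨i - 1, by omega⟩
      have hN : D.q ^ (D.N - 2 - 2 * i) * D.q ^ (2 * i + 2) = 1 := by
        rw [← pow_add, show D.N - 2 - 2 * i + (2 * i + 2) = D.N by omega, D.primitive.pow_eq_one]
      rw [show 2 * (i + 1) - 2 = 2 * i by omega, eq_inv_of_mul_eq_one_left hN]
      simp only [inv_pow]
      field_simp
      ring
    rw [← eigenvalue]
    refine mul_eq_smul_of_mul_F_mul D.g_mem_borel D.rel.g_F (pow_ne_zero 2 D.q_ne_zero) G.mem ?_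
    rw [G.F_mul, D.rel.g_E.mul_pow_mul (g_mul_F_pow_mul_e hi j)]
  c_left := ⟨_, c_mul_F_pow_mul_e i j⟩
  c_right := by
    have c_F_y := D.rel.c_E.mul_pow_mul (c_mul_F_pow_mul_e i j) (2 * i - 2)
    rw [← G.F_mul] at c_F_y
    exact ⟨_, mul_eq_smul_of_mul_F_mul D.c_mem_borel D.rel.c_F (neg_ne_zero.mpr one_ne_zero)
      G.mem c_F_y⟩
  F_left := D.F_mul_F_pow_mul _
  F_right := G.F_mul

lemma exists_F_pow_mul_eq_e (G : D.IsGamma i j y) (hi : 1 ≤ i) (hiN : i ≤ D.N / 2) :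
    ∃ C : k, C ≠ 0 ∧ D.F ^ (D.N - 1) * (D.E ^ (D.N - 2 * i) * y) =
      C • (D.F ^ (D.N - 1) * D.e i j) := by
  have := (G.linkedPair hi hiN).exists_F_pow_mul_E_pow_mul_eq_left D.rel D.primitive
  rwa [show D.N - 2 - (2 * i - 2) = D.N - 2 * i by omega] at this

lemma exists_F_pow_mul_eq_E_pow_mul_e (G : D.IsGamma i j y) (hi : 1 ≤ i) (hiN : i ≤ D.N / 2) :
    ∃ C : k, C ≠ 0 ∧ D.F ^ (D.N - 1) * (D.E ^ (D.N - 1) * y) =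
      C • (D.F ^ (D.N - 1) * (D.E ^ (2 * i - 1) * D.e i j)) := by
  obtain ⟨C, hC, h⟩ :=
    (G.linkedPair hi hiN).exists_F_pow_mul_E_pow_mul_eq_right D.rel D.primitive
  have killed : D.F * (D.E ^ (2 * i - 2 + 1) * (D.F ^ (D.N - 1) * D.e i j)) = 0 := by
    rw [D.rel.F_mul_E_pow_succ_mul (g_mul_F_pow_mul_e hi j), D.F_mul_F_pow_mul, mul_zero,
      smul_zero, structConst_self D.q_ne_zero, zero_smul, add_zero]
  refine ⟨C * (D.q ^ (D.N - 1)) ^ (2 * i - 2 + 1),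
    mul_ne_zero hC (pow_ne_zero _ (pow_ne_zero _ D.q_ne_zero)), ?_⟩
  rw [h, E_pow_mul_F_pow_mul _ (D.e_mem_borel i j) killed, smul_smul,
    show 2 * i - 2 + 1 = 2 * i - 1 by omega]

lemma finrank_summand_le (G : D.IsGamma i j y) (hi : 1 ≤ i) (hiN : i ≤ D.N / 2) (h : ℕ) :
    Module.Finite k (summand D.E y h) ∧ Module.finrank k (summand D.E y h) ≤ 2 * D.N := by
  set W := (LinkedPair.stringSpan k D.N D.E (D.F ^ (D.N - 1) * D.e i j) y)
  have : Module.Finite k W := FiniteDimensional.span_of_finite k (Set.finite_range _)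
  have le : (summand D.E y h).restrictScalars k ≤ W.map (LinearMap.mulRight k (D.E ^ h)) := by
    rintro _ ⟨z, hz, rfl⟩
    obtain ⟨a, rfl⟩ := Submodule.mem_span_singleton.mp hz
    have hy : y ∈ W := by simpa using (LinkedPair.E_pow_mul_mem_stringSpan D.rel.E_pow 0).2
    exact ⟨a * y, mul_mem_of_mem_adjoin ((G.linkedPair hi hiN).mul_mem_stringSpan D.rel)
      (D.adjoin_eq_top ▸ Algebra.mem_top) hy, rfl⟩
  exact ⟨Submodule.finiteDimensional_of_le le, (Submodule.finrank_mono le).trans <|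
    (Submodule.finrank_map_le _ _).trans (LinkedPair.finrank_stringSpan_le D.N D.E _ y)⟩

end IsGamma

section Spanning

variable {γ : ℕ → ℕ → A}

lemma exists_mem_iSup_summand_of_F_pow_mul
    (hγ : ∀ i j, 1 ≤ i → i ≤ D.N / 2 → j ≤ 1 → D.IsGamma i j (γ i j)) {i j b : ℕ} (hi : 1 ≤ i)
    (hiN : i ≤ D.N / 2) (hj : j ≤ 1) (hb : b < D.N) :
    ∃ m ∈ ⨆ t : SummandIndex D.N, summand D.E (γ t.1.1 t.1.2.1) t.1.2.2,
      D.F ^ (D.N - 1) * m = D.F ^ (D.N - 1) * (D.e i j * D.E ^ b) := by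
  set S := ⨆ t : SummandIndex D.N, summand D.E (γ t.1.1 t.1.2.1) t.1.2.2
  have mem_S : ∀ {i j h} (_ : 1 ≤ i) (_ : i ≤ D.N / 2) (_ : j ≤ 1) (_ : h ≤ D.N - 2 * i) (C : k) x,
      C • (x * γ i j * D.E ^ h) ∈ S := fun hi hiN hj hh C x =>
    S.smul_of_tower_mem C <| le_iSup (fun t : SummandIndex D.N =>
      summand D.E (γ t.1.1 t.1.2.1) t.1.2.2) ⟨⟨_, _, _⟩, hi, hiN, hj, hh⟩
        (mul_mul_pow_mem_summand _ _ _ x)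
  rcases le_or_gt b (D.N - 2 * i) with hb' | hb'
  · obtain ⟨C, hC, h⟩ := (hγ i j hi hiN hj).exists_F_pow_mul_eq_e hi hiN
    refine ⟨_, mem_S hi hiN hj hb' C⁻¹ (D.E ^ (D.N - 2 * i)), ?_⟩
    rw [mul_smul_comm, ← mul_assoc, h, smul_mul_assoc, smul_smul, inv_mul_cancel₀ hC, one_smul,
      mul_assoc]
  · -- Here `P_{2i,j}` contributes nothing; its linked partner `P_{N+2-2i,1-j}` does instead.
    obtain ⟨l, hl⟩ : ∃ l, l = D.N / 2 + 1 - i := ⟨_, rfl⟩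
    have hN := Nat.mul_div_cancel' D.two_dvd
    obtain ⟨C, hC, h⟩ := (hγ l (1 - j) (by omega) (by omega)
      (by omega)).exists_F_pow_mul_eq_E_pow_mul_e (by omega) (by omega)
    have swap : D.e i j * D.E ^ (2 * l - 1) = D.E ^ (2 * l - 1) * D.e l (1 - j) := by
      rw [D.rel.weightProj_mul_E_pow D.q_ne_zero]
      exact congrArg _ (e_congr (by simp [Nat.ModEq, show i + (2 * l - 1) = l + D.N / 2 by omega])
        (by unfold Nat.ModEq; omega))
    refine ⟨_, mem_S (i := l) (j := 1 - j) (h := b - (2 * l - 1)) (by omega) (by omega) (by omega)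
      (by omega) C⁻¹ (D.E ^ (D.N - 1)), ?_⟩
    rw [mul_smul_comm, ← mul_assoc, h, smul_mul_assoc, smul_smul, inv_mul_cancel₀ hC, one_smul,
      ← swap, mul_assoc, mul_assoc, ← pow_add, show 2 * l - 1 + (b - (2 * l - 1)) = b by omega]

lemma iSup_summand_eq_top
    (hγ : ∀ i j, 1 ≤ i → i ≤ D.N / 2 → j ≤ 1 → D.IsGamma i j (γ i j)) :
    ⨆ t : SummandIndex D.N, summand D.E (γ t.1.1 t.1.2.1) t.1.2.2 = ⊤ := by
  set S := ⨆ t : SummandIndex D.N, summand D.E (γ t.1.1 t.1.2.1) t.1.2.2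
  refine eq_top_of_forall_mul_eq_zero D.rel.F_pow fun x hx => ?_
  obtain ⟨y, hy, rfl⟩ := exists_eq_F_pow_mul hx
  refine (D.borel_le fun b hb i _ j _ => ?_ : _ ≤ ((S.restrictScalars k).map
    (LinearMap.mulLeft k (D.F ^ (D.N - 1)))).comap (LinearMap.mulLeft k (D.F ^ (D.N - 1)))) hy
  obtain ⟨i', hi', hiN', hi⟩ :=
    exists_add_modEq (Nat.div_pos D.two_le two_pos) 1 b i
  obtain ⟨j', -, hj', hj⟩ := exists_add_modEq two_pos 0 b j
  rw [← e_congr hi hj, ← D.rel.weightProj_mul_E_pow D.q_ne_zero]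
  exact exists_mem_iSup_summand_of_F_pow_mul hγ hi' (by omega) (by omega) hb

theorem isInternal_summand
    (hγ : ∀ i j, 1 ≤ i → i ≤ D.N / 2 → j ≤ 1 → D.IsGamma i j (γ i j)) :
    DirectSum.IsInternal
      fun t : SummandIndex D.N => summand D.E (γ t.1.1 t.1.2.1) t.1.2.2 := by
  obtain ⟨f, hf⟩ := exists_injective_summandIndex D.two_dvd
  have : Finite (SummandIndex D.N) := .of_injective f hf
  have : Fintype (SummandIndex D.N) := .ofFinite _
  have bound : ∀ t : SummandIndex D.N,
      Module.Finite k (summand D.E (γ t.1.1 t.1.2.1) t.1.2.2) ∧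
        Module.finrank k (summand D.E (γ t.1.1 t.1.2.1) t.1.2.2) ≤ 2 * D.N := fun t =>
    (hγ _ _ t.2.1 t.2.2.1 t.2.2.2.1).finrank_summand_le t.2.1 t.2.2.1 _
  have : ∀ t : SummandIndex D.N, Module.Finite k (summand D.E (γ t.1.1 t.1.2.1) t.1.2.2) :=
    fun t => (bound t).1
  refine isInternal_of_iSup_eq_top (iSup_summand_eq_top hγ) D.linearIndependent ?_
  calc ∑ t : SummandIndex D.N, Module.finrank k (summand D.E (γ t.1.1 t.1.2.1) t.1.2.2)
      ≤ Fintype.card (SummandIndex D.N) * (2 * D.N) :=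
        sum_le_card_nsmul _ _ _ fun t _ => (bound t).2
    _ ≤ 2 * (D.N / 2 * (D.N / 2)) * (2 * D.N) :=
        Nat.mul_le_mul_right _ (by simpa using Fintype.card_le_of_injective f hf)
    _ = D.N * (D.N * (D.N / 2 * 2)) := by
        obtain ⟨M, hM⟩ := D.two_dvd
        rw [hM, Nat.mul_div_cancel_left M two_pos]; ring
    _ = Fintype.card (Fin D.N × Fin D.N × Fin (D.N / 2) × Fin 2) := by simp

end Spanning

end FLPresentation

end Decomposition

section Representation

variable {k : Type} [Field k] {N : ℕ} {q κ ε : k}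

/-- The basis vector `X_{a,b}` of the space with basis `Fin N × Fin N`, extended by zero to all
natural indices, so that the operators below act by the same formula everywhere. -/
def basisVec (k : Type) [Field k] (N a b : ℕ) : Fin N × Fin N →₀ k :=
  if h : a < N ∧ b < N then Finsupp.single (⟨a, h.1⟩, ⟨b, h.2⟩) 1 else 0

lemma basisVec_eq_zero_left {a : ℕ} (ha : N ≤ a) (b : ℕ) : basisVec k N a b = 0 :=
  dif_neg fun h => ha.not_gt h.1

lemma basisVec_eq_zero_right (a : ℕ) {b : ℕ} (hb : N ≤ b) : basisVec k N a b = 0 :=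
  dif_neg fun h => hb.not_gt h.2

lemma basisVec_fin (a b : Fin N) : basisVec k N a b = Finsupp.single (a, b) 1 :=
  dif_pos ⟨a.2, b.2⟩

lemma end_ext {S T : Module.End k (Fin N × Fin N →₀ k)}
    (h : ∀ a b, S (basisVec k N a b) = T (basisVec k N a b)) : S = T :=
  Finsupp.lhom_ext' fun t => LinearMap.ext_ring <| by simpa [basisVec_fin] using h t.1 t.2

/-- The endomorphism sending `X_{a,b}` to `f a b` for `a, b < N`. -/
def basisMap (f : ℕ → ℕ → Fin N × Fin N →₀ k) : Module.End k (Fin N × Fin N →₀ k) :=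
  Finsupp.linearCombination k fun t => f t.1 t.2

lemma basisMap_basisVec {f : ℕ → ℕ → Fin N × Fin N →₀ k}
    (hf : ∀ a b, N ≤ a ∨ N ≤ b → f a b = 0) (a b : ℕ) :
    basisMap f (basisVec k N a b) = f a b := by
  by_cases h : a < N ∧ b < N
  · simp [basisMap, basisVec, h]
  · rw [basisVec, dif_neg h, map_zero, hf a b (by omega)]

/-- The diagonal operator with eigenvalue `κ * x ^ a * y ^ b` on `X_{a,b}`. -/
def diagOp (N : ℕ) (κ x y : k) : Module.End k (Fin N × Fin N →₀ k) :=
  basisMap fun a b => (κ * x ^ a * y ^ b) • basisVec k N a b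

/-- The action of `F` on the representation with basis `X_{a,b} = F ^ a * E ^ b * X_{0,0}`. -/
def lowerOp (k : Type) [Field k] (N : ℕ) : Module.End k (Fin N × Fin N →₀ k) :=
  basisMap fun a b => basisVec k N (a + 1) b

/-- The coefficient in `mul_pow_succ_of_skew'`, for `g` acting on `X_{0,b}` by
`κ * (q⁻¹ ^ 2) ^ b`. -/
def raiseCoeff (q κ : k) (a b : ℕ) : k := gauss k q a * (q - q ^ a * (κ * (q⁻¹ ^ 2) ^ b))

/-- The action of `E` on the representation with basis `X_{a,b} = F ^ a * E ^ b * X_{0,0}`, in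
which `g` acts on `X_{0,0}` by `κ`. -/
def raiseOp (N : ℕ) (q κ : k) : Module.End k (Fin N × Fin N →₀ k) :=
  basisMap fun a b => q ^ a • basisVec k N a (b + 1) - raiseCoeff q κ a b • basisVec k N (a - 1) b

lemma diagOp_basisVec (κ x y : k) (a b : ℕ) :
    diagOp N κ x y (basisVec k N a b) = (κ * x ^ a * y ^ b) • basisVec k N a b :=
  basisMap_basisVec (fun a b h => by
    rcases h with h | h
    · rw [basisVec_eq_zero_left h, smul_zero]
    · rw [basisVec_eq_zero_right a h, smul_zero]) a b

lemma lowerOp_basisVec (a b : ℕ) :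
    lowerOp k N (basisVec k N a b) = basisVec k N (a + 1) b :=
  basisMap_basisVec (fun a b h => h.elim (fun h => basisVec_eq_zero_left (h.trans a.le_succ) b)
    fun h => basisVec_eq_zero_right _ h) a b

lemma lowerOp_pow_basisVec (m a b : ℕ) :
    (lowerOp k N ^ m) (basisVec k N a b) = basisVec k N (a + m) b := by
  induction m with
  | zero => rfl
  | succ m ih => rw [pow_succ', Module.End.mul_apply, ih, lowerOp_basisVec, add_assoc]

lemma lowerOp_pow_self : lowerOp k N ^ N = 0 :=
  end_ext fun a b => by
    rw [lowerOp_pow_basisVec, basisVec_eq_zero_left (Nat.le_add_left N a), LinearMap.zero_apply]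

lemma raiseCoeff_zero (q κ : k) (b : ℕ) : raiseCoeff q κ 0 b = 0 := by simp [raiseCoeff, gauss]

lemma gauss_self (hq : IsPrimitiveRoot q N) (hN : 2 ≤ N) : gauss k q N = 0 :=
  hq.geom_sum_eq_zero hN

lemma raiseOp_basisVec (hq : IsPrimitiveRoot q N) (hN : 2 ≤ N) (κ : k) (a b : ℕ) :
    raiseOp N q κ (basisVec k N a b) =
      q ^ a • basisVec k N a (b + 1) - raiseCoeff q κ a b • basisVec k N (a - 1) b := by
  refine basisMap_basisVec (fun a b h => ?_) a b
  rcases h with h | h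
  · rw [basisVec_eq_zero_left h, smul_zero, zero_sub, neg_eq_zero]
    rcases h.eq_or_lt with rfl | h
    · rw [raiseCoeff, gauss_self hq hN, zero_mul, zero_smul]
    · rw [basisVec_eq_zero_left (Nat.le_sub_one_of_lt h), smul_zero]
  · rw [basisVec_eq_zero_right _ h, basisVec_eq_zero_right _ (h.trans b.le_succ), smul_zero,
      smul_zero, sub_zero]

lemma raiseOp_pow_basisVec_zero (hq : IsPrimitiveRoot q N) (hN : 2 ≤ N) (κ : k) (m b : ℕ) :
    (raiseOp N q κ ^ m) (basisVec k N 0 b) = basisVec k N 0 (b + m) := by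
  induction m with
  | zero => rfl
  | succ m ih =>
    rw [pow_succ', Module.End.mul_apply, ih, raiseOp_basisVec hq hN, raiseCoeff_zero, zero_smul,
      sub_zero, pow_zero, one_smul, add_assoc]

lemma skewCommute_diagOp_lowerOp (κ x y : k) : SkewCommute x (diagOp N κ x y) (lowerOp k N) :=
  end_ext fun a b => by
    simp only [Module.End.mul_apply, LinearMap.smul_apply, lowerOp_basisVec, diagOp_basisVec,
      map_smul, smul_smul]
    congr 1
    ring

lemma skewCommute_diagOp_raiseOp (hq : IsPrimitiveRoot q N) (hN : 2 ≤ N) (κ δ : k) {x y : k}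
    (hxy : y * x = 1) : SkewCommute y (diagOp N δ x y) (raiseOp N q κ) :=
  end_ext fun a b => by
    simp only [Module.End.mul_apply, LinearMap.smul_apply, raiseOp_basisVec hq hN,
      diagOp_basisVec, map_smul, map_sub, smul_sub, smul_smul]
    congr 2
    · ring
    · cases a with
      | zero => simp only [raiseCoeff_zero, zero_mul, mul_zero]
      | succ a =>
        rw [Nat.add_sub_cancel, pow_succ]
        linear_combination (-raiseCoeff q κ (a + 1) b * δ * x ^ a * y ^ b) * hxy

lemma raiseCoeff_succ (hq : q ≠ 0) (κ : k) (a b : ℕ) :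
    q⁻¹ * raiseCoeff q κ (a + 1) b =
      raiseCoeff q κ a b + (1 - κ * (q ^ 2) ^ a * (q⁻¹ ^ 2) ^ b) := by
  have geom : (q - 1) * gauss k q a = q ^ a - 1 := by rw [gauss, mul_geom_sum]
  have cancel : q⁻¹ * q = 1 := inv_mul_cancel₀ hq
  simp only [raiseCoeff, gauss_succ, ← pow_mul, mul_comm 2 a]
  rw [pow_mul q a 2, pow_succ q a]
  linear_combination (gauss k q a - q ^ a * κ * q⁻¹ ^ (2 * b) * gauss k q a + q ^ a - q ^ a *
    q ^ a * κ * q⁻¹ ^ (2 * b)) * cancel - geom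

lemma lowerOp_mul_raiseOp (hq : IsPrimitiveRoot q N) (hN : 2 ≤ N) (κ : k) :
    lowerOp k N * raiseOp N q κ = q⁻¹ • (raiseOp N q κ * lowerOp k N) +
      (1 - diagOp N κ (q ^ 2) (q⁻¹ ^ 2)) := by
  have hq0 : q ≠ 0 := hq.ne_zero (by omega)
  refine end_ext fun a b => ?_
  have pred : raiseCoeff q κ a b • basisVec k N (a - 1 + 1) b =
      raiseCoeff q κ a b • basisVec k N a b := by
    cases a with
    | zero => simp only [raiseCoeff_zero, zero_smul]
    | succ a => rfl
  simp only [Module.End.mul_apply, LinearMap.add_apply, LinearMap.sub_apply, LinearMap.smul_apply,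
    Module.End.one_apply, raiseOp_basisVec hq hN, lowerOp_basisVec, diagOp_basisVec, map_smul,
    map_sub, pred, smul_sub, smul_smul, raiseCoeff_succ hq0, pow_succ', inv_mul_cancel_left₀ hq0,
    Nat.add_sub_cancel]
  module

lemma raiseOp_pow_self (hq : IsPrimitiveRoot q N) (hN : 2 ≤ N) (κ : k) :
    raiseOp N q κ ^ N = 0 := by
  have hq0 : q ≠ 0 := hq.ne_zero (by omega)
  have comm : lowerOp k N * raiseOp N q κ ^ N = raiseOp N q κ ^ N * lowerOp k N := by
    have h := mul_pow_succ_of_skew (A := Module.End k (Fin N × Fin N →₀ k))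
      (skewCommute_diagOp_raiseOp hq hN κ κ (x := q ^ 2) (y := q⁻¹ ^ 2)
        (by rw [← mul_pow, inv_mul_cancel₀ hq0, one_pow]))
      (lowerOp_mul_raiseOp hq hN κ) (N - 1)
    rwa [Nat.sub_add_cancel (by omega), gauss_self hq.inv hN, zero_smul, add_zero,
      hq.inv.pow_eq_one, one_smul] at h
  refine end_ext fun a b => ?_
  rw [LinearMap.zero_apply, ← zero_add a, ← lowerOp_pow_basisVec, ← Module.End.mul_apply,
    ((show Commute (lowerOp k N) (raiseOp N q κ ^ N) from comm).pow_left a).symm.eq,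
    Module.End.mul_apply, raiseOp_pow_basisVec_zero hq hN,
    basisVec_eq_zero_right 0 (Nat.le_add_left N b), map_zero]

lemma diagOp_pow_eq_one {x y : k} {m : ℕ} (hκ : κ ^ m = 1) (hx : x ^ m = 1) (hy : y ^ m = 1) :
    diagOp N κ x y ^ m = 1 := by
  have pow_basisVec : ∀ s a b, (diagOp N κ x y ^ s) (basisVec k N a b) =
      (κ * x ^ a * y ^ b) ^ s • basisVec k N a b := fun s a b => by
    induction s with
    | zero => simp
    | succ s ih => rw [pow_succ, Module.End.mul_apply, diagOp_basisVec, map_smul, ih, smul_smul,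
        pow_succ']
  refine end_ext fun a b => ?_
  rw [pow_basisVec, mul_pow, mul_pow, pow_right_comm, pow_right_comm y, hκ, hx, hy]
  simp

lemma commute_diagOp (κ x y δ z w : k) : Commute (diagOp N κ x y) (diagOp N δ z w) :=
  end_ext fun a b => by
    simp only [Module.End.mul_apply, diagOp_basisVec, map_smul, smul_smul]
    congr 1
    ring

theorem torusRelations_basisVec (hq : IsPrimitiveRoot q N) (hN0 : 0 < N) (hN : 2 ∣ N)
    (hκ : κ ^ (N / 2) = 1) (hε : ε ^ 2 = 1) :
    TorusRelations N q (diagOp N κ (q ^ 2) (q⁻¹ ^ 2)) (diagOp N ε (-1) (-1)) (raiseOp N q κ)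
      (lowerOp k N) := by
  have hN2 : 2 ≤ N := Nat.le_of_dvd hN0 hN
  have hq0 : q ≠ 0 := hq.ne_zero hN0.ne'
  refine
  { g_E := skewCommute_diagOp_raiseOp hq hN2 _ _ (by rw [← mul_pow, inv_mul_cancel₀ hq0, one_pow])
    g_F := skewCommute_diagOp_lowerOp _ _ _
    c_E := skewCommute_diagOp_raiseOp hq hN2 _ _ (by ring)
    c_F := skewCommute_diagOp_lowerOp _ _ _
    commute := commute_diagOp _ _ _ _ _ _
    g_pow := diagOp_pow_eq_one hκ ?_ ?_
    c_sq := diagOp_pow_eq_one hε neg_one_sq neg_one_sq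
    E_pow := raiseOp_pow_self hq hN2 κ
    F_pow := lowerOp_pow_self
    F_E := lowerOp_mul_raiseOp hq hN2 κ } <;>
  rw [← pow_mul, Nat.mul_div_cancel' hN]
  exacts [hq.pow_eq_one, hq.inv.pow_eq_one]

section Eigenvectors

variable {V : Type*} [AddCommGroup V] [Module k V] {m : ℕ} {T : Module.End k V} {v : V} {μ : k}

lemma eigenProj_apply (hv : T v = μ • v) :
    eigenProj m T κ v = ((m : k)⁻¹ * ∑ t ∈ range m, (κ⁻¹ * μ) ^ t) • v := by
  have pow_apply : ∀ t, ((κ⁻¹ • T) ^ t) v = (κ⁻¹ * μ) ^ t • v := fun t => by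
    induction t with
    | zero => simp
    | succ t ih => rw [pow_succ', Module.End.mul_apply, ih, map_smul, LinearMap.smul_apply, hv,
        smul_smul, smul_smul, mul_assoc, ← pow_succ]
  rw [eigenProj, LinearMap.smul_apply, LinearMap.sum_apply, mul_smul, sum_smul]
  simp only [pow_apply]

lemma eigenProj_apply_self (hm : (m : k) ≠ 0) (hκ : κ ≠ 0) (hv : T v = κ • v) :
    eigenProj m T κ v = v := by
  rw [eigenProj_apply hv, inv_mul_cancel₀ hκ]
  simp [hm]

lemma eigenProj_apply_of_ne (hm : m ≠ 0) (hκ : κ ^ m = 1) (hμ : μ ^ m = 1) (hne : μ ≠ κ)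
    (hv : T v = μ • v) : eigenProj m T κ v = 0 := by
  have hκ0 : κ ≠ 0 := by rintro rfl; simp [hm] at hκ
  have vanish : (κ⁻¹ * μ - 1) * ∑ t ∈ range m, (κ⁻¹ * μ) ^ t = 0 := by
    rw [mul_geom_sum, mul_pow, hμ, inv_pow, hκ, inv_one, one_mul, sub_self]
  rw [eigenProj_apply hv, (mul_eq_zero.mp vanish).resolve_left fun h => hne <| by
    rwa [sub_eq_zero, inv_mul_eq_one₀ hκ0, eq_comm] at h, mul_zero, zero_smul]

lemma weightProj_apply {C : Module.End k V} (hq : IsPrimitiveRoot q N) (hN0 : 0 < N) (hN : 2 ∣ N)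
    {i i' j j' : ℕ} (hi : i < N / 2) (hi' : i' < N / 2) (hj : j < 2) (hj' : j' < 2)
    (hT : T v = q ^ (2 * i') • v) (hC : C v = (-1 : k) ^ j' • v) :
    weightProj N q T C i j v = if i = i' ∧ j = j' then v else 0 := by
  obtain ⟨h2, hN2⟩ := mul_ne_zero_iff.mp (two_mul_half_cast_ne_zero hq hN0 hN)
  have hζ : IsPrimitiveRoot (q ^ 2) (N / 2) := hq.pow hN0 (Nat.mul_div_cancel' hN).symm
  rw [weightProj, Module.End.mul_apply]
  rcases eq_or_ne j j' with rfl | hjj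
  · rw [eigenProj_apply_self (by exact_mod_cast h2) (by simp) hC]
    rcases eq_or_ne i i' with rfl | hii
    · rw [if_pos ⟨rfl, rfl⟩, eigenProj_apply_self hN2 (pow_ne_zero _ (hq.ne_zero hN0.ne')) hT]
    · rw [if_neg fun h => hii h.1, eigenProj_apply_of_ne (by omega)
        (pow_two_mul_pow_half hq hN i) (pow_two_mul_pow_half hq hN i') (fun h => hii ?_) hT]
      rw [pow_mul, pow_mul] at h
      exact (hζ.pow_inj hi' hi h).symm
  · rw [if_neg fun h => hjj h.2, eigenProj_apply_of_ne two_ne_zero (neg_one_pow_sq j)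
      (neg_one_pow_sq j')
      (fun h => hjj ((isPrimitiveRoot_neg_one_two h2).pow_inj hj' hj h).symm) hC, map_zero]

lemma map_weightProj {A : Type*} [Ring A] [Algebra k A] (ρ : A →ₐ[k] Module.End k V) (g c : A)
    (i j : ℕ) : ρ (weightProj N q g c i j) = weightProj N q (ρ g) (ρ c) i j := by
  simp only [weightProj, eigenProj, map_mul, map_smul, map_sum, map_pow]

end Eigenvectors

theorem linearIndependent_of_exists_algHom {A : Type*} [Ring A] [Algebra k A] {g c E F : A}
    (hq : IsPrimitiveRoot q N) (hN0 : 0 < N) (hN : 2 ∣ N)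
    (hρ : ∀ (i : Fin (N / 2)) (j : Fin 2), ∃ ρ : A →ₐ[k] Module.End k (Fin N × Fin N →₀ k),
      ρ g = diagOp N (q ^ (2 * (i : ℕ))) (q ^ 2) (q⁻¹ ^ 2) ∧
        ρ c = diagOp N ((-1) ^ (j : ℕ)) (-1) (-1) ∧
        ρ E = raiseOp N q (q ^ (2 * (i : ℕ))) ∧ ρ F = lowerOp k N) :
    LinearIndependent k fun t : Fin N × Fin N × Fin (N / 2) × Fin 2 =>
      F ^ (t.1 : ℕ) * (E ^ (t.2.1 : ℕ) * weightProj N q g c t.2.2.1 t.2.2.2) := by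
  choose ρ hg hc hE hF using hρ
  have apply_pbw : ∀ (a b : Fin N) (i i' : Fin (N / 2)) (j j' : Fin 2),
      ρ i' j' (F ^ (a : ℕ) * (E ^ (b : ℕ) * weightProj N q g c i j)) (basisVec k N 0 0) =
        if (i, j) = (i', j') then Finsupp.single (a, b) 1 else 0 := by
    intro a b i i' j j'
    have g_apply : ρ i' j' g (basisVec k N 0 0) = q ^ (2 * (i' : ℕ)) • basisVec k N 0 0 := by
      rw [hg i' j', diagOp_basisVec]; simp
    have c_apply : ρ i' j' c (basisVec k N 0 0) = (-1 : k) ^ (j' : ℕ) • basisVec k N 0 0 := by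
      rw [hc i' j', diagOp_basisVec]; simp
    rw [map_mul, map_mul, map_weightProj, map_pow, map_pow, Module.End.mul_apply,
      Module.End.mul_apply, weightProj_apply hq hN0 hN i.2 i'.2 j.2 j'.2 g_apply c_apply]
    simp only [Prod.mk.injEq, Fin.ext_iff]
    split_ifs
    · rw [hE i' j', hF i' j',
        raiseOp_pow_basisVec_zero hq (Nat.le_of_dvd hN0 hN), lowerOp_pow_basisVec, zero_add,
        zero_add, basisVec_fin]
    · rw [map_zero, map_zero]
  refine .of_pairwise_dual_eq_zero_one _ (fun s => Finsupp.lapply (s.1, s.2.1) ∘ₗ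
    LinearMap.applyₗ (basisVec k N 0 0) ∘ₗ (ρ s.2.2.1 s.2.2.2).toLinearMap)
    (fun s t hst => (congrArg (fun v => v (s.1, s.2.1)) (apply_pbw _ _ _ _ _ _)).trans ?_)
    (fun s => (congrArg (fun v => v (s.1, s.2.1)) (apply_pbw _ _ _ _ _ _)).trans ?_)
  · split_ifs with h
    · exact Finsupp.single_eq_of_ne fun h' => hst <|
        Prod.ext (Prod.ext_iff.mp h').1 (Prod.ext (Prod.ext_iff.mp h').2 h.symm)
    · rfl
  · rw [if_pos rfl]
    exact Finsupp.single_eq_same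

end Representation

section Presentations

variable {k : Type} [Field k] {A : Type*} [Ring A] [Algebra k A] {n : ℕ} {q : k}
  {K H E F g c : A}

lemma skewCommute_iff_conj {a : k} {x y : A} {m : ℕ} (hm : m ≠ 0) (hx : x ^ m = 1) :
    SkewCommute a x y ↔ x * y * x ^ (m - 1) = a • y := by
  have right_inv : x * x ^ (m - 1) = 1 := by rw [mul_pow_sub_one hm, hx]
  have left_inv : x ^ (m - 1) * x = 1 := by rw [pow_sub_one_mul hm, hx]
  refine ⟨fun h => ?_, fun h => ?_⟩
  · rw [show x * y = a • (y * x) from h, smul_mul_assoc, mul_assoc, right_inv, mul_one]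
  · rw [SkewCommute, ← smul_mul_assoc, ← h, mul_assoc, left_inv, mul_one]

/-- The defining relations of `ũ_q(sl₂)` for elements of an arbitrary algebra, with `H` in the role
of `K̂` and the conjugation relations written as skew commutations. -/
structure KernelRelations (n : ℕ) (q : k) (K H E F : A) : Prop where
  K_pow : K ^ n = 1
  H_pow : H ^ n = (K ^ (n - 1)) ^ 2
  commute : Commute K H
  K_E : SkewCommute (q ^ n) K E
  K_F : SkewCommute (q ^ n)⁻¹ K F
  H_E : SkewCommute (q ^ n * (q ^ 2)⁻¹) H E
  H_F : SkewCommute ((q ^ n)⁻¹ * q ^ 2) H F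
  E_pow : E ^ n ^ 2 = 0
  F_pow : F ^ n ^ 2 = 0
  F_E : F * E = q⁻¹ • (E * F) + (1 - K ^ (n - 1) * H)

/-- The exponent expressing `K` through `g = K⁻¹K̂` and `c = KK̂^(n/2)`, namely
`K = c * g ^ torusExponent n`. -/
def torusExponent (n : ℕ) : ℕ := n / 2 * (n / 2 - 1)

lemma half_add_torusExponent (h4 : 4 ∣ n) : n / 2 + torusExponent n = n * (n / 4) := by
  obtain ⟨m, rfl⟩ := h4
  rw [torusExponent, show 4 * m / 2 = 2 * m by omega, Nat.mul_div_cancel_left m (by norm_num)]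
  cases m with
  | zero => rfl
  | succ m => rw [show 2 * (m + 1) - 1 = 2 * m + 1 by omega]; ring

lemma add_two_mul_torusExponent (h4 : 4 ∣ n) : n + 2 * torusExponent n = n ^ 2 / 2 := by
  have h := half_add_torusExponent h4
  have half : n ^ 2 / 2 = n * (n / 2) := by
    rw [pow_two, Nat.mul_div_assoc n (dvd_trans (by norm_num) h4)]
  rw [half, show n / 2 = 2 * (n / 4) by omega, mul_left_comm, ← h]
  omega

lemma pow_half_eq_neg_one (hn : n ≠ 0) (h2 : 2 ∣ n) (hq : IsPrimitiveRoot q (n ^ 2)) :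
    q ^ (n ^ 2 / 2) = -1 :=
  (hq.pow (by positivity)
    (Nat.div_mul_cancel (dvd_pow h2 two_ne_zero)).symm).eq_neg_one_of_two_right

lemma pow_sq_eq_one_of_pow_eq (K_pow : K ^ n = 1) (H_pow : H ^ n = (K ^ (n - 1)) ^ 2) :
    H ^ n ^ 2 = 1 := by
  rw [pow_two, pow_mul, H_pow, pow_right_comm, pow_right_comm K, K_pow, one_pow, one_pow]

namespace KernelRelations

lemma H_pow_sq (R : KernelRelations n q K H E F) : H ^ n ^ 2 = 1 :=
  pow_sq_eq_one_of_pow_eq R.K_pow R.H_pow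

lemma g_pow (R : KernelRelations n q K H E F) (h2 : 2 ∣ n) :
    (K ^ (n - 1) * H) ^ (n ^ 2 / 2) = 1 := by
  rw [pow_two, Nat.mul_div_assoc n h2, (R.commute.pow_left _).mul_pow, pow_mul H, R.H_pow,
    ← pow_mul _ 2, Nat.mul_div_cancel' h2, pow_right_comm K _ n, R.K_pow, one_pow, mul_one,
    pow_right_comm, pow_mul, R.K_pow, one_pow, one_pow]

lemma c_sq (R : KernelRelations n q K H E F) (hn : n ≠ 0) (h2 : 2 ∣ n) :
    (K * H ^ (n / 2)) ^ 2 = 1 := by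
  rw [(R.commute.pow_right _).mul_pow, ← pow_mul, Nat.div_mul_cancel h2, R.H_pow,
    ← ((Commute.refl K).pow_right _).mul_pow, mul_pow_sub_one hn, R.K_pow, one_pow]

lemma commute_g_c (R : KernelRelations n q K H E F) (a b : ℕ) :
    Commute (K ^ a * H) (K * H ^ b) :=
  (((Commute.refl K).pow_left a).mul_right (R.commute.pow_pow a b)).mul_left
    (R.commute.symm.mul_right ((Commute.refl H).pow_right b))

theorem torusRelations (R : KernelRelations n q K H E F) (hn : n ≠ 0) (h2 : 2 ∣ n)
    (hq : IsPrimitiveRoot q (n ^ 2)) :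
    TorusRelations (n ^ 2) q (K ^ (n - 1) * H) (K * H ^ (n / 2)) E F := by
  have hq0 : q ≠ 0 := hq.ne_zero (pow_ne_zero 2 hn)
  have q_pow : (q ^ n) ^ (n - 1) * q ^ n = 1 := by
    rw [pow_sub_one_mul hn, ← pow_mul, ← pow_two, hq.pow_eq_one]
  have q_pow_inv : (q ^ n)⁻¹ ^ (n - 1) * (q ^ n)⁻¹ = 1 := by
    rw [inv_pow, ← mul_inv, q_pow, inv_one]
  have q_half : q ^ n * (q ^ n * (q ^ 2)⁻¹) ^ (n / 2) = -1 := by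
    rw [mul_pow, inv_pow, ← pow_mul q 2, Nat.mul_div_cancel' h2, ← pow_mul,
      ← Nat.mul_div_assoc n h2, ← pow_two, mul_left_comm, mul_inv_cancel₀ (pow_ne_zero n hq0),
      mul_one, pow_half_eq_neg_one hn h2 hq]
  have q_half_inv : (q ^ n)⁻¹ * ((q ^ n)⁻¹ * q ^ 2) ^ (n / 2) = -1 := by
    rw [← inv_inv (q ^ 2), ← mul_inv, inv_pow, ← mul_inv, q_half, inv_neg_one]
  exact
  { g_E := by simpa only [← mul_assoc, q_pow, one_mul, inv_pow] using
      (R.K_E.pow_left (n - 1)).mul_left R.H_E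
    g_F := by simpa only [← mul_assoc, q_pow_inv, one_mul] using
      (R.K_F.pow_left (n - 1)).mul_left R.H_F
    c_E := q_half ▸ R.K_E.mul_left (R.H_E.pow_left _)
    c_F := q_half_inv ▸ R.K_F.mul_left (R.H_F.pow_left _)
    commute := R.commute_g_c _ _
    g_pow := R.g_pow h2
    c_sq := R.c_sq hn h2
    E_pow := R.E_pow
    F_pow := R.F_pow
    F_E := R.F_E }

lemma c_mul_g_pow_torusExponent (R : KernelRelations n q K H E F) (h4 : 4 ∣ n) :
    K * H ^ (n / 2) * (K ^ (n - 1) * H) ^ torusExponent n = K :=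
  have inv_pow_n : (K ^ (n - 1)) ^ n = 1 := by rw [pow_right_comm, R.K_pow, one_pow]
  calc K * H ^ (n / 2) * (K ^ (n - 1) * H) ^ torusExponent n
      = K * H ^ (n / 2 + torusExponent n) * (K ^ (n - 1)) ^ torusExponent n := by
        rw [(R.commute.symm.pow_right _).symm.mul_pow,
          ((R.commute.pow_left (n - 1)).pow_pow _ _).eq, pow_add]
        simp only [mul_assoc]
    _ = K * (K ^ (n - 1)) ^ (2 * (n / 4) + torusExponent n) := by
        rw [half_add_torusExponent h4, pow_mul, R.H_pow, ← pow_mul _ 2, mul_assoc, ← pow_add]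
    _ = K := by
        rw [show 2 * (n / 4) = n / 2 by omega, half_add_torusExponent h4, pow_mul, inv_pow_n,
          one_pow, mul_one]

lemma mem_span_of_mem_adjoin (R : KernelRelations n q K H E F) (hn : n ≠ 0) (hq : q ≠ 0) {x : A}
    (hx : x ∈ Algebra.adjoin k {K, H, E}) :
    x ∈ Submodule.span k {y | ∃ c < n, ∃ d < n ^ 2, ∃ b < n ^ 2, K ^ c * H ^ d * E ^ b = y} := by
  set V := Submodule.span k {y | ∃ c < n, ∃ d < n ^ 2, ∃ b < n ^ 2, K ^ c * H ^ d * E ^ b = y}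
  have mem_V : ∀ c d b, K ^ c * H ^ d * E ^ b ∈ V := fun c d b => by
    rcases lt_or_ge b (n ^ 2) with hb | hb
    · rw [pow_eq_pow_mod c R.K_pow, pow_eq_pow_mod d R.H_pow_sq]
      exact Submodule.subset_span
        ⟨_, Nat.mod_lt _ (by positivity), _, Nat.mod_lt _ (by positivity), b, hb, rfl⟩
    · rw [pow_eq_zero_of_le hb R.E_pow, mul_zero]
      exact V.zero_mem
  have stable : ∀ a ∈ ({K, H, E} : Set A), ∀ v ∈ V, a * v ∈ V := by
    intro a ha v hv
    refine (Submodule.span_le.mpr ?_ : V ≤ V.comap (LinearMap.mulLeft k a)) hv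
    rintro _ ⟨c, -, d, -, b, -, rfl⟩
    rw [SetLike.mem_coe, Submodule.mem_comap, LinearMap.mulLeft_apply]
    rcases ha with rfl | rfl | rfl
    · rw [← mul_assoc, ← mul_assoc, ← pow_succ']
      exact mem_V (c + 1) d b
    · rw [← mul_assoc, ← mul_assoc, (R.commute.pow_left c).symm.eq, mul_assoc (K ^ c), ← pow_succ']
      exact mem_V c (d + 1) b
    · have skew := (R.K_E.pow_left c).mul_left (R.H_E.pow_left d)
      have scalar_ne_zero : (q ^ n) ^ c * (q ^ n * (q ^ 2)⁻¹) ^ d ≠ 0 := by positivity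
      rw [← V.smul_mem_iff scalar_ne_zero, ← mul_assoc, ← smul_mul_assoc, ← skew, mul_assoc,
        ← pow_succ']
      exact mem_V c d (b + 1)
  have one_mem : 1 ∈ V := by simpa using mem_V 0 0 0
  simpa using mul_mem_of_mem_adjoin stable hx one_mem

end KernelRelations

namespace TorusRelations

lemma c_mul_g_pow_pow (T : TorusRelations (n ^ 2) q g c E F) (h2 : 2 ∣ n) :
    (c * g ^ torusExponent n) ^ n = 1 := by
  have c_pow : c ^ n = 1 := by rw [← Nat.mul_div_cancel' h2, pow_mul, T.c_sq, one_pow]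
  rw [(T.commute.symm.pow_right _).mul_pow, c_pow, one_mul, ← pow_mul, torusExponent,
    mul_right_comm, mul_comm (n / 2), ← Nat.mul_div_assoc n h2, ← pow_two, pow_mul, T.g_pow,
    one_pow]

lemma c_mul_g_pow_mul_g_pow (T : TorusRelations (n ^ 2) q g c E F) (hn : n ≠ 0) (h4 : 4 ∣ n) :
    (c * g ^ torusExponent n * g) ^ n = ((c * g ^ torusExponent n) ^ (n - 1)) ^ 2 := by
  have K_pow := T.c_mul_g_pow_pow (dvd_trans (by norm_num) h4)
  have K_g : Commute (c * g ^ torusExponent n) g :=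
    T.commute.symm.mul_left ((Commute.refl g).pow_left _)
  have g_pow_mul_sq : g ^ n * (c * g ^ torusExponent n) ^ 2 = 1 := by
    rw [(T.commute.symm.pow_right _).mul_pow, T.c_sq, one_mul, ← pow_mul, ← pow_add, mul_comm _ 2,
      add_two_mul_torusExponent h4, T.g_pow]
  calc (c * g ^ torusExponent n * g) ^ n
      = g ^ n * (c * g ^ torusExponent n * (c * g ^ torusExponent n) ^ (n - 1)) ^ 2 := by
        rw [K_g.mul_pow, mul_pow_sub_one hn, K_pow, one_mul, one_pow, mul_one]
    _ = ((c * g ^ torusExponent n) ^ (n - 1)) ^ 2 := by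
        rw [((Commute.refl _).pow_right _).mul_pow, ← mul_assoc, g_pow_mul_sq, one_mul]

theorem kernelRelations (T : TorusRelations (n ^ 2) q g c E F) (hn : n ≠ 0) (h4 : 4 ∣ n)
    (hq : IsPrimitiveRoot q (n ^ 2)) :
    KernelRelations n q (c * g ^ torusExponent n) (c * g ^ torusExponent n * g) E F := by
  have h2 : 2 ∣ n := dvd_trans (by norm_num) h4
  have K_g : Commute (c * g ^ torusExponent n) g :=
    T.commute.symm.mul_left ((Commute.refl g).pow_left _)
  have K_pow := T.c_mul_g_pow_pow h2
  have eigenvalue_F : -1 * (q ^ 2) ^ torusExponent n = (q ^ n)⁻¹ := by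
    refine eq_inv_of_mul_eq_one_left ?_
    rw [mul_assoc, ← pow_mul, ← pow_add, add_comm, add_two_mul_torusExponent h4,
      pow_half_eq_neg_one hn h2 hq, neg_one_mul, neg_neg]
  have eigenvalue_E : -1 * (q⁻¹ ^ 2) ^ torusExponent n = q ^ n := by
    rw [inv_pow, inv_pow, ← inv_neg_one, ← mul_inv, eigenvalue_F, inv_inv]
  have K_E : SkewCommute (q ^ n) (c * g ^ torusExponent n) E :=
    eigenvalue_E ▸ T.c_E.mul_left (T.g_E.pow_left _)
  have K_F : SkewCommute (q ^ n)⁻¹ (c * g ^ torusExponent n) F :=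
    eigenvalue_F ▸ T.c_F.mul_left (T.g_F.pow_left _)
  exact
  { K_pow := K_pow
    H_pow := T.c_mul_g_pow_mul_g_pow hn h4
    commute := (Commute.refl _).mul_right K_g
    K_E := K_E
    K_F := K_F
    H_E := inv_pow q 2 ▸ K_E.mul_left T.g_E
    H_F := K_F.mul_left T.g_F
    E_pow := T.E_pow
    F_pow := T.F_pow
    F_E := by rw [← mul_assoc, pow_sub_one_mul hn, K_pow, one_mul, T.F_E] }

end TorusRelations

end Presentations

section UniversalProperty

variable {k : Type} [Field k] {n : ℕ} {q : k}

lemma kernelRelations_U (hn : n ≠ 0) :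
    KernelRelations n q (K k n q) (Kh k n q) (E k n q) (F k n q) := by
  have rel : ∀ {x y}, Rel k n q x y →
      RingQuot.mkAlgHom k (Rel k n q) x = RingQuot.mkAlgHom k (Rel k n q) y :=
    fun h => RingQuot.mkAlgHom_rel k h
  have K_pow : K k n q ^ n = 1 := by simpa only [K, map_pow, map_one] using rel .Kord
  have H_pow : Kh k n q ^ n = (K k n q ^ (n - 1)) ^ 2 := by
    simpa only [K, Kh, map_pow] using rel .Khord
  have H_pow_sq : Kh k n q ^ n ^ 2 = 1 := pow_sq_eq_one_of_pow_eq K_pow H_pow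
  exact
  { K_pow := K_pow
    H_pow := H_pow
    commute := by simpa only [K, Kh, Commute, SemiconjBy, map_mul] using rel .KKh
    K_E := (skewCommute_iff_conj hn K_pow).mpr <| by
      simpa only [K, E, map_mul, map_pow, map_smul] using rel .KE
    K_F := (skewCommute_iff_conj hn K_pow).mpr <| by
      simpa only [K, F, map_mul, map_pow, map_smul] using rel .KF
    H_E := (skewCommute_iff_conj (pow_ne_zero 2 hn) H_pow_sq).mpr <| by
      simpa only [Kh, E, map_mul, map_pow, map_smul] using rel .KhE
    H_F := (skewCommute_iff_conj (pow_ne_zero 2 hn) H_pow_sq).mpr <| by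
      simpa only [Kh, F, map_mul, map_pow, map_smul] using rel .KhF
    E_pow := by simpa only [E, map_pow, map_zero] using rel .Enil
    F_pow := by simpa only [F, map_pow, map_zero] using rel .Fnil
    F_E := by
      rw [add_comm, ← sub_eq_iff_eq_add]
      simpa only [K, Kh, E, F, map_sub, map_mul, map_smul, map_pow, map_one] using rel .EF }

lemma adjoin_U_eq_top : Algebra.adjoin k {K k n q, Kh k n q, E k n q, F k n q} = ⊤ := by
  refine eq_top_iff.mpr fun x _ => ?_
  obtain ⟨y, rfl⟩ := RingQuot.mkAlgHom_surjective k (Rel k n q) x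
  induction y using FreeAlgebra.induction with
  | grade0 r => rw [AlgHom.commutes]; exact Subalgebra.algebraMap_mem _ r
  | grade1 i =>
    refine Algebra.subset_adjoin ?_
    fin_cases i
    exacts [.inl rfl, .inr (.inl rfl), .inr (.inr (.inl rfl)), .inr (.inr (.inr rfl))]
  | mul a b ha hb => rw [map_mul]; exact mul_mem (ha trivial) (hb trivial)
  | add a b ha hb => rw [map_add]; exact add_mem (ha trivial) (hb trivial)

variable {A : Type*} [Ring A] [Algebra k A] {K' H' E' F' g c : A}

lemma KernelRelations.exists_algHom (R : KernelRelations n q K' H' E' F') (hn : n ≠ 0) :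
    ∃ ρ : U k n q →ₐ[k] A, ρ (K k n q) = K' ∧ ρ (Kh k n q) = H' ∧ ρ (E k n q) = E' ∧
      ρ (F k n q) = F' := by
  let φ : FreeAlgebra k (Fin 4) →ₐ[k] A := FreeAlgebra.lift k ![K', H', E', F']
  have φ_K : φ (FreeAlgebra.ι k 0) = K' := FreeAlgebra.lift_ι_apply _ _
  have φ_H : φ (FreeAlgebra.ι k 1) = H' := FreeAlgebra.lift_ι_apply _ _
  have φ_E : φ (FreeAlgebra.ι k 2) = E' := FreeAlgebra.lift_ι_apply _ _
  have φ_F : φ (FreeAlgebra.ι k 3) = F' := FreeAlgebra.lift_ι_apply _ _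
  have φ_rel : ∀ ⦃x y⦄, Rel k n q x y → φ x = φ y := by
    intro x y h
    cases h <;>
      simp only [map_mul, map_pow, map_sub, map_smul, map_one, map_zero, φ_K, φ_H, φ_E, φ_F]
    · exact R.K_pow
    · exact R.H_pow
    · exact R.commute
    · exact (skewCommute_iff_conj hn R.K_pow).mp R.K_E
    · exact (skewCommute_iff_conj hn R.K_pow).mp R.K_F
    · exact (skewCommute_iff_conj (pow_ne_zero 2 hn) R.H_pow_sq).mp R.H_E
    · exact (skewCommute_iff_conj (pow_ne_zero 2 hn) R.H_pow_sq).mp R.H_F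
    · exact R.E_pow
    · exact R.F_pow
    · rw [R.F_E, add_sub_cancel_left]
  exact ⟨RingQuot.liftAlgHom k ⟨φ, φ_rel⟩,
    (RingQuot.liftAlgHom_mkAlgHom_apply ..).trans φ_K,
    (RingQuot.liftAlgHom_mkAlgHom_apply ..).trans φ_H,
    (RingQuot.liftAlgHom_mkAlgHom_apply ..).trans φ_E,
    (RingQuot.liftAlgHom_mkAlgHom_apply ..).trans φ_F⟩

/-- The semisimple element `g = K⁻¹K̂` of `ũ_q(sl₂)`. -/
def gU (k : Type) [Field k] (n : ℕ) (q : k) : U k n q := Kinv k n q * Kh k n q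

/-- The involution `c = KK̂^(n/2)` of `ũ_q(sl₂)`. -/
def cU (k : Type) [Field k] (n : ℕ) (q : k) : U k n q := K k n q * Kh k n q ^ (n / 2)

lemma torusRelations_U (hn : n ≠ 0) (h2 : 2 ∣ n) (hq : IsPrimitiveRoot q (n ^ 2)) :
    TorusRelations (n ^ 2) q (gU k n q) (cU k n q) (E k n q) (F k n q) :=
  (kernelRelations_U hn).torusRelations hn h2 hq

lemma K_eq_cU_mul_gU_pow (hn : n ≠ 0) (h4 : 4 ∣ n) :
    K k n q = cU k n q * gU k n q ^ torusExponent n :=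
  ((kernelRelations_U hn).c_mul_g_pow_torusExponent h4).symm

lemma Kh_eq_K_mul_gU (hn : n ≠ 0) : Kh k n q = K k n q * gU k n q := by
  rw [gU, Kinv, ← mul_assoc, mul_pow_sub_one hn, (kernelRelations_U hn).K_pow, one_mul]

lemma adjoin_gU_cU_eq_top (hn : n ≠ 0) (h4 : 4 ∣ n) :
    Algebra.adjoin k {gU k n q, cU k n q, E k n q, F k n q} = ⊤ := by
  set B := Algebra.adjoin k {gU k n q, cU k n q, E k n q, F k n q}
  have g_mem : gU k n q ∈ B := Algebra.subset_adjoin (by simp)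
  have c_mem : cU k n q ∈ B := Algebra.subset_adjoin (by simp)
  have K_mem : K k n q ∈ B := K_eq_cU_mul_gU_pow (q := q) hn h4 ▸ mul_mem c_mem (pow_mem g_mem _)
  have Kh_mem : Kh k n q ∈ B := Kh_eq_K_mul_gU (q := q) hn ▸ mul_mem K_mem g_mem
  rw [eq_top_iff, ← adjoin_U_eq_top (k := k) (n := n) (q := q), Algebra.adjoin_le_iff]
  rintro x (rfl | rfl | rfl | rfl)
  exacts [K_mem, Kh_mem, Algebra.subset_adjoin (by simp), Algebra.subset_adjoin (by simp)]

lemma TorusRelations.exists_algHom (T : TorusRelations (n ^ 2) q g c E' F') (hn : n ≠ 0)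
    (h4 : 4 ∣ n) (hq : IsPrimitiveRoot q (n ^ 2)) :
    ∃ ρ : U k n q →ₐ[k] A, ρ (gU k n q) = g ∧ ρ (cU k n q) = c ∧ ρ (E k n q) = E' ∧
      ρ (F k n q) = F' := by
  obtain ⟨ρ, ρ_K, ρ_H, ρ_E, ρ_F⟩ := (T.kernelRelations hn h4 hq).exists_algHom hn
  have K_pow := T.c_mul_g_pow_pow (dvd_trans (by norm_num) h4)
  have ρ_g : ρ (gU k n q) = g := by
    rw [gU, Kinv, map_mul, map_pow, ρ_K, ρ_H, ← mul_assoc, pow_sub_one_mul hn, K_pow, one_mul]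
  have half_ne_zero : n ^ 2 / 2 ≠ 0 := by
    have : 2 ^ 2 ≤ n ^ 2 := Nat.pow_le_pow_left (by have := Nat.le_of_dvd (by omega) h4; omega) 2
    omega
  have g_unit : IsUnit g := .of_pow_eq_one T.g_pow half_ne_zero
  refine ⟨ρ, ρ_g, (g_unit.pow (torusExponent n)).mul_right_cancel ?_, ρ_E, ρ_F⟩
  rw [← ρ_K, K_eq_cU_mul_gU_pow hn h4, map_mul, map_pow, ρ_g]

theorem linearIndependent_pbw_U (hn : n ≠ 0) (h4 : 4 ∣ n) (hq : IsPrimitiveRoot q (n ^ 2)) :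
    LinearIndependent k fun t : Fin (n ^ 2) × Fin (n ^ 2) × Fin (n ^ 2 / 2) × Fin 2 =>
      F k n q ^ (t.1 : ℕ) * (E k n q ^ (t.2.1 : ℕ) *
        weightProj (n ^ 2) q (gU k n q) (cU k n q) t.2.2.1 t.2.2.2) :=
  have hN : 2 ∣ n ^ 2 := dvd_pow (dvd_trans (by norm_num) h4) two_ne_zero
  linearIndependent_of_exists_algHom hq (by positivity) hN fun i j =>
    (torusRelations_basisVec hq (by positivity) hN (pow_two_mul_pow_half hq hN i)
      (neg_one_pow_sq j)).exists_algHom hn h4 hq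

end UniversalProperty

section QuasiFrobeniusLusztigKernel

variable {k : Type} [Field k] {n : ℕ} {q : k}

/-- The presentation of `ũ_q(sl₂)` by `g`, `c`, `E` and `F`. -/
def presentationU (hn : n ≠ 0) (h4 : 4 ∣ n) (hq : IsPrimitiveRoot q (n ^ 2)) :
    FLPresentation k (U k n q) where
  N := n ^ 2
  q := q
  g := gU k n q
  c := cU k n q
  E := E k n q
  F := F k n q
  pos := by positivity
  two_dvd := dvd_pow (dvd_trans (by norm_num) h4) two_ne_zero
  primitive := hq
  rel := torusRelations_U hn (dvd_trans (by norm_num) h4) hq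
  adjoin_eq_top := adjoin_gU_cU_eq_top hn h4
  linearIndependent := linearIndependent_pbw_U hn h4 hq

lemma borel_presentationU (hn : n ≠ 0) (h4 : 4 ∣ n) (hq : IsPrimitiveRoot q (n ^ 2)) :
    (presentationU hn h4 hq).borel = Algebra.adjoin k {K k n q, Kh k n q, E k n q} := by
  have K_mem : K k n q ∈ (presentationU hn h4 hq).borel :=
    K_eq_cU_mul_gU_pow (q := q) hn h4 ▸ mul_mem (FLPresentation.c_mem_borel _)
      (pow_mem (FLPresentation.g_mem_borel _) _)
  have Kh_mem : Kh k n q ∈ (presentationU hn h4 hq).borel :=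
    Kh_eq_K_mul_gU (q := q) hn ▸ mul_mem K_mem (FLPresentation.g_mem_borel _)
  have K_mem' : K k n q ∈ Algebra.adjoin k {K k n q, Kh k n q, E k n q} :=
    Algebra.subset_adjoin (by simp)
  have Kh_mem' : Kh k n q ∈ Algebra.adjoin k {K k n q, Kh k n q, E k n q} :=
    Algebra.subset_adjoin (by simp)
  refine le_antisymm (Algebra.adjoin_le ?_) (Algebra.adjoin_le ?_)
  · rintro x (rfl | rfl | rfl)
    exacts [mul_mem (pow_mem K_mem' _) Kh_mem', mul_mem K_mem' (pow_mem Kh_mem' _),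
      Algebra.subset_adjoin (by simp [presentationU])]
  · rintro x (rfl | rfl | rfl)
    exacts [K_mem, Kh_mem, FLPresentation.E_mem_borel _]

lemma pbw_eq_filtration (hn : n ≠ 0) (h4 : 4 ∣ n) (hq : IsPrimitiveRoot q (n ^ 2)) :
    pbw k n q = (presentationU hn h4 hq).filtration (n ^ 2 - 1) := by
  have two_le : 2 ≤ n ^ 2 := (presentationU hn h4 hq).two_le
  refine le_antisymm (Submodule.span_le.mpr ?_) (FLPresentation.filtration_le fun a ha y hy => ?_)
  · rintro _ ⟨a, b, c, d, ha, -, -, -, rfl⟩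
    rw [mul_assoc, mul_assoc]
    refine FLPresentation.F_pow_mul_mem_filtration (by omega) ?_
    rw [borel_presentationU]
    exact mul_mem (pow_mem (Algebra.subset_adjoin (by simp)) _)
      (mul_mem (pow_mem (Algebra.subset_adjoin (by simp)) _)
        (pow_mem (Algebra.subset_adjoin (by simp)) _))
  · rw [borel_presentationU] at hy
    have hy' := (kernelRelations_U hn).mem_span_of_mem_adjoin hn
      (hq.ne_zero (pow_ne_zero 2 hn)) hy
    refine (Submodule.span_le.mpr ?_ :
      _ ≤ (pbw k n q).comap (LinearMap.mulLeft k (F k n q ^ a))) hy'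
    rintro _ ⟨c, hc, d, hd, b, hb, rfl⟩
    rw [SetLike.mem_coe, Submodule.mem_comap, LinearMap.mulLeft_apply, ← mul_assoc, ← mul_assoc]
    exact Submodule.subset_span ⟨a, b, c, d, by omega, by omega, by omega, by omega, rfl⟩

lemma phi_eq_eigenProj (hn : n ≠ 0) (h2 : 2 ∣ n) (hq : IsPrimitiveRoot q (n ^ 2)) (i : ℕ) :
    phi k n q i = eigenProj (n ^ 2 / 2) (gU k n q) (q ^ (2 * i)) := by
  have hN : 2 ∣ n ^ 2 := dvd_pow h2 two_ne_zero
  have scalar : (n ^ 2 : k)⁻¹ * 2 = ((n ^ 2 / 2 : ℕ) : k)⁻¹ := by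
    have h := mul_ne_zero_iff.mp (two_mul_half_cast_ne_zero hq (by positivity) hN)
    have cast_eq : (n ^ 2 : k) = 2 * (n ^ 2 / 2 : ℕ) := by
      exact_mod_cast congrArg (Nat.cast (R := k)) (Nat.mul_div_cancel' hN).symm
    rw [cast_eq, mul_inv, mul_right_comm, inv_mul_cancel₀ h.1, one_mul]
  rw [phi, scalar, eigenProj]
  simp only [smul_pow, ← inv_pow, ← pow_mul, gU]

lemma oneJ_eq_eigenProj {j : ℕ} (hj : j ≤ 1) :
    oneJ k n q j = eigenProj 2 (cU k n q) ((-1 : k) ^ j) := by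
  rcases Nat.le_one_iff_eq_zero_or_eq_one.mp hj with rfl | rfl
  · rw [oneJ, if_pos rfl, pow_zero, eigenProj_two_one, cU]
  · rw [oneJ, if_neg one_ne_zero, pow_one]
    exact (eigenProj_two_neg_one (cU k n q)).symm

lemma eIdem_eq_weightProj (hn : n ≠ 0) (h2 : 2 ∣ n) (hq : IsPrimitiveRoot q (n ^ 2)) (i : ℕ)
    {j : ℕ} (hj : j ≤ 1) :
    eIdem k n q i j = weightProj (n ^ 2) q (gU k n q) (cU k n q) i j := by
  rw [eIdem, phi_eq_eigenProj hn h2 hq, oneJ_eq_eigenProj hj, weightProj]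

theorem isGamma_gam (hn : n ≠ 0) (h4 : 4 ∣ n) (hq : IsPrimitiveRoot q (n ^ 2)) {i j : ℕ}
    (hi : 1 ≤ i) (hi' : i ≤ n ^ 2 / 2) (hj : j ≤ 1) :
    (presentationU hn h4 hq).IsGamma i j (gam k n q i j) := by
  have beta_eq : beta k n q i j = E k n q ^ (2 * i - 2) *
      (F k n q ^ (n ^ 2 - 1) * weightProj (n ^ 2) q (gU k n q) (cU k n q) i j) := by
    rw [beta, alpha, eIdem_eq_weightProj hn (dvd_trans (by norm_num) h4) hq i hj]
  have existsUnique : ∃! x, x ∈ pbw k n q ∧ F k n q * x = beta k n q i j := by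
    rw [pbw_eq_filtration hn h4 hq, beta_eq]
    exact (presentationU hn h4 hq).existsUnique_F_mul_eq
      (show 2 * i - 2 + 2 ≤ n ^ 2 by omega) _
  have gam_spec : gam k n q i j ∈ pbw k n q ∧ F k n q * gam k n q i j = beta k n q i j := by
    rw [gam, dif_pos existsUnique]
    exact existsUnique.choose_spec.1
  exact ⟨pbw_eq_filtration hn h4 hq ▸ gam_spec.1, gam_spec.2.trans beta_eq⟩

end QuasiFrobeniusLusztigKernel

end QFL

open QFL in
theorem statement8_general (k : Type) [Field k] (n : ℕ) (hn : 0 < n) (h4 : 4 ∣ n) (q : k)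
    (hq : IsPrimitiveRoot q (n ^ 2)) :
    DirectSum.IsInternal
      (fun t : {t : ℕ × ℕ × ℕ //
          1 ≤ t.1 ∧ t.1 ≤ n ^ 2 / 2 ∧ t.2.1 ≤ 1 ∧ t.2.2 ≤ n ^ 2 - 2 * t.1} =>
        Submodule.map
          (LinearMap.toSpanSingleton (U k n q) (U k n q) (E k n q ^ t.1.2.2))
          (P k n q t.1.1 t.1.2.1)) :=
  (presentationU hn.ne' h4 hq).isInternal_summand fun _ _ => isGamma_gam hn.ne' h4 hq

open QFL in
/-- Theorem 2.12: `u = ⨁_{j=0}^{1} ⨁_{i=1}^{n²/2} ⨁_{h=0}^{n²-2i} P_{2i,j}E^h`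
as a left module over itself. -/
theorem statement8 (k : Type) [Field k] [IsAlgClosed k] [CharZero k]
    (n : ℕ) (hn : 0 < n) (h4 : 4 ∣ n) (q : k) (hq : IsPrimitiveRoot q (n ^ 2)) :
    DirectSum.IsInternal
      (fun t : {t : ℕ × ℕ × ℕ //
          1 ≤ t.1 ∧ t.1 ≤ n ^ 2 / 2 ∧ t.2.1 ≤ 1 ∧ t.2.2 ≤ n ^ 2 - 2 * t.1} =>
        Submodule.map
          (LinearMap.toSpanSingleton (U k n q) (U k n q) (E k n q ^ t.1.2.2))
          (P k n q t.1.1 t.1.2.1)) := by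
  exact statement8_general k n hn h4 q hq
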